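/- Let n be even with n/2 ≥ 7 and n ≠ 16, and let r ≥ n/2 − 2. Let ρ : Fin r → Equiv.Perm (Fin n) be a string C-group with generated subgroup H such that: the subgroup H_0 generated by {ρ j : j ≠ 0} is transitive on Fin n; (ρ 0 * ρ 1)^2 = 1; and there is a set B ⊆ Fin n with B ≠ ∅, B ≠ Set.univ, satisfying MulAction.IsBlock for the action of H, such that ρ 0 maps B onto its complement (so {B, Bᶜ} is a block system whose two blocks are interchanged by ρ 0). Then H acts primitively on the ⟨ρ 0⟩-orbits: every X ⊆ Fin n that satisfies MulAction.IsBlock for the action of H and is invariant under ρ 0 is either empty, or of the form {x, ρ 0 x} for some x, or all of Fin n. -/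

import Mathlib

/-- A string group generated by involutions (sggi): each generator has order 2 and
nonconsecutive generators commute. -/
def IsSggi {n r : ℕ} (ρ : Fin r → Equiv.Perm (Fin n)) : Prop :=
  (∀ i, orderOf (ρ i) = 2) ∧
  ∀ i j : Fin r, 1 < |((i : ℕ) : ℤ) - ((j : ℕ) : ℤ)| → (ρ i * ρ j) ^ 2 = 1

/-- A string C-group: an sggi satisfying the intersection property. -/
def IsStringC {n r : ℕ} (ρ : Fin r → Equiv.Perm (Fin n)) : Prop :=
  IsSggi ρ ∧ ∀ J K : Set (Fin r),
    Subgroup.closure (ρ '' J) ⊓ Subgroup.closure (ρ '' K) =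
      Subgroup.closure (ρ '' (J ∩ K))

/-
As `ρ 0` is central and interchanges the blocks `B` and `Bᶜ`, no nontrivial element of the group
`H₀` generated by the remaining `ρ i` preserves every orbit of `ρ 0`: it would be `ρ 0` itself,
which the intersection property forbids. So `H₀` is a transitive string C-group of rank `r - 1` on
the `n / 2` orbits, and it suffices that an imprimitive string C-group of degree `m ≥ 9` has rank
less than `m - 3`; degree 7 is prime, and degree 8 is excluded.

Choose a maximal system of `k` blocks of size `ℓ`, so that the action on the blocks is primitive,
and grow an interval of generators around one that moves a block. As long as the interval is
intransitive on the blocks, one of its two neighbours must fuse some of its orbits: otherwise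
these orbits would form an invariant partition. So a short interval is transitive on the blocks.
The generators at distance at least two from it centralize a transitive group, so the elements
they generate are determined by their action on a single block whenever they fix the blocks. As
`t` pairwise commuting generators of a string C-group generate a group of order `2 ^ t`, at most
`ℓ / 2` of those generators commute pairwise. This bounds the rank, with three cases left over:
two blocks, where one also needs that abelian permutation groups on `ℓ` points have order at most
`3 ^ (ℓ / 3)`, three blocks of size three, and five blocks of size two.
-/

namespace StringCGroup

open Finset (range)

section Parabolic

variable {G : Type*} [Group G]

/-- The parabolic subgroup of a family `σ` of generators determined by the index set `J`. Generators
are indexed by `ℕ`, and index sets are finite sets, so that statements about them are decidable. -/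
def parabolic (σ : ℕ → G) (J : Finset ℕ) : Subgroup G := Subgroup.closure (σ '' J)

/-- `G` is a string C-group of rank `r` with distinguished generators `σ 0, …, σ (r - 1)`; the
remaining values of `σ` are irrelevant. -/
structure IsStringCGroup (σ : ℕ → G) (r : ℕ) : Prop where
  mul_self : ∀ i < r, σ i * σ i = 1
  ne_one : ∀ i < r, σ i ≠ 1
  commute : ∀ i j, i + 1 < j → j < r → Commute (σ i) (σ j)
  inf_le : ∀ J ⊆ range r, ∀ K ⊆ range r,
    parabolic σ J ⊓ parabolic σ K ≤ parabolic σ (J ∩ K)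
  parabolic_range : parabolic σ (range r) = ⊤

/-- Index sets at distance at least two: the corresponding generators commute. -/
abbrev IsApart (S T : Finset ℕ) : Prop := ∀ i ∈ S, ∀ j ∈ T, i + 1 < j ∨ j + 1 < i

/-- Index sets whose members are pairwise at distance at least two: the corresponding parabolic
subgroup is an elementary abelian 2-group. -/
abbrev IsSparse (T : Finset ℕ) : Prop := ∀ i ∈ T, ∀ j ∈ T, i ≠ j → i + 1 < j ∨ j + 1 < i

variable {σ : ℕ → G} {J K S T : Finset ℕ} {i j r : ℕ}

lemma mem_parabolic (hi : i ∈ J) : σ i ∈ parabolic σ J :=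
  Subgroup.subset_closure ⟨i, hi, rfl⟩

lemma parabolic_le_iff {P : Subgroup G} : parabolic σ J ≤ P ↔ ∀ i ∈ J, σ i ∈ P := by
  simp [parabolic, Subgroup.closure_le, Set.subset_def]

lemma parabolic_mono (h : J ⊆ K) : parabolic σ J ≤ parabolic σ K :=
  parabolic_le_iff.2 fun _ hi => mem_parabolic (h hi)

lemma parabolic_union : parabolic σ (J ∪ K) = parabolic σ J ⊔ parabolic σ K := by
  rw [parabolic, Finset.coe_union, Set.image_union, Subgroup.closure_union, parabolic, parabolic]

lemma parabolic_empty : parabolic σ ∅ = ⊥ := by simp [parabolic]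

lemma parabolic_le_centralizer (h : ∀ i ∈ S, ∀ j ∈ T, Commute (σ i) (σ j)) :
    parabolic σ S ≤ Subgroup.centralizer (parabolic σ T) := by
  rw [parabolic_le_iff, parabolic, Subgroup.centralizer_closure]
  rintro i hi _ ⟨j, hj, rfl⟩
  exact (h i hi j hj).symm

lemma mul_self_eq_one_of_mem_parabolic (hsq : ∀ i ∈ T, σ i * σ i = 1)
    (hcomm : ∀ i ∈ T, ∀ j ∈ T, Commute (σ i) (σ j)) {p : G} (hp : p ∈ parabolic σ T) :
    p * p = 1 := by
  refine Subgroup.closure_induction (p := fun x _ => x * x = 1) ?_ (by simp) ?_ ?_ hp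
  · rintro _ ⟨i, hi, rfl⟩
    exact hsq i hi
  · intro x y hx hy hxx hyy
    have hyx : Commute y x := parabolic_le_centralizer hcomm hx y hy
    rw [hyx.mul_mul_mul_comm, hxx, hyy, one_mul]
  · intro x _ hxx
    rw [← mul_inv_rev, hxx, inv_one]

namespace IsStringCGroup

lemma commute_of_apart (h : IsStringCGroup σ r) (hi : i < r) (hj : j < r)
    (hij : i + 1 < j ∨ j + 1 < i) :
    Commute (σ i) (σ j) :=
  hij.elim (fun hij => h.commute i j hij hj) fun hij => (h.commute j i hij hi).symm

lemma le_centralizer_of_isApart (h : IsStringCGroup σ r) (hS : S ⊆ range r) (hT : T ⊆ range r)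
    (hST : IsApart S T) :
    parabolic σ S ≤ Subgroup.centralizer (parabolic σ T) :=
  parabolic_le_centralizer fun i hi j hj =>
    h.commute_of_apart (Finset.mem_range.1 (hS hi)) (Finset.mem_range.1 (hT hj)) (hST i hi j hj)

lemma commute_of_isSparse (h : IsStringCGroup σ r) (hT : T ⊆ range r) (hsparse : IsSparse T) :
    ∀ i ∈ T, ∀ j ∈ T, Commute (σ i) (σ j) := fun i hi j hj => by
  rcases eq_or_ne i j with rfl | hij
  · exact Commute.refl _
  · exact h.commute_of_apart (Finset.mem_range.1 (hT hi)) (Finset.mem_range.1 (hT hj))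
      (hsparse i hi j hj hij)

lemma mul_self_of_isSparse (h : IsStringCGroup σ r) (hT : T ⊆ range r) (hsparse : IsSparse T)
    {p : G} (hp : p ∈ parabolic σ T) : p * p = 1 :=
  mul_self_eq_one_of_mem_parabolic (fun i hi => h.mul_self i (Finset.mem_range.1 (hT hi)))
    (h.commute_of_isSparse hT hsparse) hp

lemma disjoint_parabolic (h : IsStringCGroup σ r) (hJ : J ⊆ range r) (hK : K ⊆ range r)
    (hJK : Disjoint J K) : Disjoint (parabolic σ J) (parabolic σ K) := by
  have := h.inf_le J hJ K hK
  rwa [Finset.disjoint_iff_inter_eq_empty.1 hJK, parabolic_empty, ← disjoint_iff_inf_le] at this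

lemma notMem_parabolic (h : IsStringCGroup σ r) (hi : i < r) (hJ : J ⊆ range r) (hiJ : i ∉ J) :
    σ i ∉ parabolic σ J := fun hmem =>
  h.ne_one i hi <| Subgroup.disjoint_def.1
    (h.disjoint_parabolic (J := {i}) (by simpa using hi) hJ (by simpa using hiJ))
    (mem_parabolic (Finset.mem_singleton_self i)) hmem

lemma eq_one_or_eq_of_mem_parabolic_singleton (h : IsStringCGroup σ r) (hi : i < r) {g : G}
    (hg : g ∈ parabolic σ {i}) : g = 1 ∨ g = σ i := by
  have hsq : σ i ^ 2 = 1 := (pow_two _).trans (h.mul_self i hi)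
  rw [parabolic, Finset.coe_singleton, Set.image_singleton, ← Subgroup.zpowers_eq_closure] at hg
  obtain ⟨k, rfl⟩ := hg
  rcases Int.even_or_odd' k with ⟨m, rfl | rfl⟩ <;>
    simp [zpow_add, zpow_mul, hsq]

lemma two_pow_card_le [Finite G] (h : IsStringCGroup σ r) (hT : T ⊆ range r) :
    2 ^ T.card ≤ Nat.card (parabolic σ T) := by
  induction T using Finset.induction_on with
  | empty => exact Nat.card_pos
  | insert i T hi ih =>
    have hTr : T ⊆ range r := (Finset.subset_insert i T).trans hT
    have hle : parabolic σ T ≤ parabolic σ (insert i T) :=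
      parabolic_mono (Finset.subset_insert i T)
    have hne : (parabolic σ T).relIndex (parabolic σ (insert i T)) ≠ 1 := fun heq =>
      h.notMem_parabolic (Finset.mem_range.1 (hT (Finset.mem_insert_self i T))) hTr hi
        (Subgroup.relIndex_eq_one.1 heq (mem_parabolic (Finset.mem_insert_self i T)))
    have hne0 : (parabolic σ T).relIndex (parabolic σ (insert i T)) ≠ 0 :=
      Subgroup.index_ne_zero_of_finite
    rw [Finset.card_insert_of_notMem hi, pow_succ, ← Subgroup.relIndex_bot_left,
      ← Subgroup.relIndex_mul_relIndex _ _ _ bot_le hle, Subgroup.relIndex_bot_left]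
    exact Nat.mul_le_mul (ih hTr) (by omega)

end IsStringCGroup

end Parabolic

lemma cube_le_three_pow (n : ℕ) : n ^ 3 ≤ 3 ^ n := by
  rcases Nat.lt_or_ge n 3 with hn | hn
  · interval_cases n <;> norm_num
  · induction n, hn using Nat.le_induction with
    | base => norm_num
    | succ n hn ih => rw [pow_succ 3]; nlinarith [mul_self_nonneg n]

section FaithfulAction

variable {A X : Type*} [Group A] [MulAction A X] [Finite X]

lemma card_le_prod_card_orbit [FaithfulSMul A X] [Fintype (MulAction.orbitRel.Quotient A X)]
    (hcomm : ∀ a b : A, Commute a b) :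
    Nat.card A ≤ ∏ ω : MulAction.orbitRel.Quotient A X, Nat.card ω.orbit := by
  rw [← Nat.card_pi]
  refine Nat.card_le_card_of_injective (fun a ω => ⟨a • ω.out, by
    rw [MulAction.orbitRel.Quotient.orbit_eq_orbit_out _ Quotient.out_eq']
    exact MulAction.mem_orbit _ a⟩) fun a b hab => eq_of_smul_eq_smul fun x : X => ?_
  obtain ⟨g, hg⟩ : x ∈ MulAction.orbit A (Quotient.mk'' x : MulAction.orbitRel.Quotient A X).out :=
    MulAction.orbitRel_apply.1 (Setoid.symm' _ (Quotient.mk_out x))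
  have hout := congrArg Subtype.val (congrFun hab (Quotient.mk'' x))
  rw [← hg, smul_smul, smul_smul, hcomm a, hcomm b, mul_smul, mul_smul]
  exact congrArg (g • ·) hout

lemma sum_card_orbit [Fintype (MulAction.orbitRel.Quotient A X)] :
    ∑ ω : MulAction.orbitRel.Quotient A X, Nat.card ω.orbit = Nat.card X := by
  rw [Nat.card_congr (MulAction.selfEquivSigmaOrbits' A X), Nat.card_sigma]

lemma card_cube_le_three_pow [FaithfulSMul A X] (hcomm : ∀ a b : A, Commute a b) :
    Nat.card A ^ 3 ≤ 3 ^ Nat.card X := by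
  have : Fintype (MulAction.orbitRel.Quotient A X) := Fintype.ofFinite _
  calc Nat.card A ^ 3
      ≤ (∏ ω : MulAction.orbitRel.Quotient A X, Nat.card ω.orbit) ^ 3 :=
        Nat.pow_le_pow_left (card_le_prod_card_orbit hcomm) 3
    _ = ∏ ω : MulAction.orbitRel.Quotient A X, Nat.card ω.orbit ^ 3 := by rw [Finset.prod_pow]
    _ ≤ ∏ ω : MulAction.orbitRel.Quotient A X, 3 ^ Nat.card ω.orbit :=
        Finset.prod_le_prod' fun _ _ => cube_le_three_pow _
    _ = 3 ^ Nat.card X := by rw [Finset.prod_pow_eq_pow_sum, sum_card_orbit]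

lemma card_orbit_le_two_pow_half (hsq : ∀ a : A, a * a = 1)
    (ω : MulAction.orbitRel.Quotient A X) : Nat.card ω.orbit ≤ 2 ^ (Nat.card ω.orbit / 2) := by
  have : Fact (Nat.Prime 2) := ⟨Nat.prime_two⟩
  have hp : IsPGroup 2 A := fun a => ⟨1, by rw [pow_one, pow_two, hsq]⟩
  rw [MulAction.orbitRel.Quotient.orbit_eq_orbit_out _ Quotient.out_eq']
  obtain ⟨t, ht⟩ := hp.card_orbit ω.out
  rw [ht]
  rcases t with _ | t
  · simp
  · rw [pow_succ, Nat.mul_div_cancel _ two_pos, ← pow_succ]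
    exact Nat.pow_le_pow_right two_pos Nat.lt_two_pow_self

lemma card_le_two_pow_half [FaithfulSMul A X] (hsq : ∀ a : A, a * a = 1) :
    Nat.card A ≤ 2 ^ (Nat.card X / 2) := by
  have : Fintype (MulAction.orbitRel.Quotient A X) := Fintype.ofFinite _
  have hcomm : ∀ a b : A, Commute a b :=
    Commute.of_orderOf_dvd_two fun a => orderOf_dvd_of_pow_eq_one ((pow_two a).trans (hsq a))
  calc Nat.card A
      ≤ ∏ ω : MulAction.orbitRel.Quotient A X, Nat.card ω.orbit := card_le_prod_card_orbit hcomm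
    _ ≤ ∏ ω : MulAction.orbitRel.Quotient A X, 2 ^ (Nat.card ω.orbit / 2) :=
        Finset.prod_le_prod' fun ω _ => card_orbit_le_two_pow_half hsq ω
    _ = 2 ^ ∑ ω : MulAction.orbitRel.Quotient A X, Nat.card ω.orbit / 2 :=
        Finset.prod_pow_eq_pow_sum _ _ _
    _ ≤ 2 ^ (Nat.card X / 2) := by
        refine Nat.pow_le_pow_right two_pos ?_
        rw [Nat.le_div_iff_mul_le two_pos, Finset.sum_mul, ← sum_card_orbit (A := A)]
        exact Finset.sum_le_sum fun ω _ => Nat.div_mul_le_self _ _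

lemma card_le_factorial [FaithfulSMul A X] : Nat.card A ≤ (Nat.card X).factorial := by
  rw [← Nat.card_perm]
  exact Nat.card_le_card_of_injective _ (MulAction.toPerm_injective (α := A) (β := X))

end FaithfulAction

section Fibers

variable {G Ω K : Type*} [Group G] [MulAction G Ω] [MulAction G K]

/-- The fibre over `b` of an equivariant map `β` from points to blocks, that is, the block with
name `b`, as an action of the stabilizer of `b`. -/
def fiber (β : Ω →[G] K) (b : K) : SubMulAction (MulAction.stabilizer G b) Ω where
  carrier := {x | β x = b}
  smul_mem' g x hx := (map_smul β g.1 x).trans <| (congrArg (g.1 • ·) hx).trans g.2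

variable {β : Ω →[G] K} {b : K} {A P : Subgroup G}

lemma mem_fiber {x : Ω} : x ∈ fiber β b ↔ β x = b := Iff.rfl

lemma smul_eq_of_le_centralizer [MulAction.IsPretransitive P K]
    (hAP : A ≤ Subgroup.centralizer P) {a : G} (ha : a ∈ A) (hab : a • b = b) (c : K) :
    a • c = c := by
  obtain ⟨p, rfl⟩ := MulAction.exists_smul_eq P b c
  rw [Subgroup.smul_def, smul_smul, ← hAP ha p p.2, mul_smul, hab]

lemma eq_of_smul_eq_on_fiber [FaithfulSMul G Ω] [MulAction.IsPretransitive P K] {a a' : G}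
    (ha : a ∈ Subgroup.centralizer (P : Set G)) (ha' : a' ∈ Subgroup.centralizer (P : Set G))
    (haa' : ∀ x : Ω, β x = b → a • x = a' • x) : a = a' := by
  refine eq_of_smul_eq_smul fun x : Ω => ?_
  obtain ⟨p, hp⟩ := MulAction.exists_smul_eq P (β x) b
  have hpx := haa' (p.1 • x) ((map_smul β p.1 x).trans hp)
  rw [smul_smul, smul_smul, ← ha p p.2, ← ha' p p.2, mul_smul, mul_smul] at hpx
  exact smul_left_cancel _ hpx

lemma faithfulSMul_fiber [FaithfulSMul G Ω] [MulAction.IsPretransitive P K]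
    (hAP : A ≤ Subgroup.centralizer P) :
    FaithfulSMul (A.subgroupOf (MulAction.stabilizer G b)) (fiber β b) where
  eq_of_smul_eq_smul {a a'} haa' :=
    Subtype.ext <| Subtype.ext <| eq_of_smul_eq_on_fiber (hAP a.2) (hAP a'.2)
      fun x hx => congrArg Subtype.val (haa' ⟨x, hx⟩)

lemma card_le_two_pow_half_card_fiber [Finite Ω] [FaithfulSMul G Ω] [MulAction.IsPretransitive P K]
    (hAP : A ≤ Subgroup.centralizer P) (hb : A ≤ MulAction.stabilizer G b)
    (hsq : ∀ a ∈ A, a * a = 1) : Nat.card A ≤ 2 ^ (Nat.card (fiber β b) / 2) := by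
  have := faithfulSMul_fiber (β := β) (b := b) hAP
  rw [← Nat.card_congr (Subgroup.subgroupOfEquivOfLe hb).toEquiv]
  exact card_le_two_pow_half fun a => Subtype.ext (Subtype.ext (hsq a a.2))

lemma exists_ne_one_smul_eq_on_fiber [Finite Ω] (hb : A ≤ MulAction.stabilizer G b)
    (hsq : ∀ a ∈ A, a * a = 1) (hcard : 2 ^ (Nat.card (fiber β b) / 2) < Nat.card A) :
    ∃ a ∈ A, a ≠ 1 ∧ ∀ x : Ω, β x = b → a • x = x := by
  by_contra! hcon
  have : FaithfulSMul (A.subgroupOf (MulAction.stabilizer G b)) (fiber β b) :=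
    ⟨fun {a a'} haa' => by
      refine (inv_mul_eq_one.1 ?_).symm
      by_contra hne
      obtain ⟨x, hx, hmoves⟩ := hcon (a'⁻¹ * a : A.subgroupOf _).1.1 (a'⁻¹ * a).2
        fun hone => hne (Subtype.ext (Subtype.ext hone))
      refine hmoves ((mul_smul a'.1.1⁻¹ a.1.1 x).trans (inv_smul_eq_iff.2 ?_))
      exact congrArg Subtype.val (haa' ⟨x, hx⟩)⟩
  rw [← Nat.card_congr (Subgroup.subgroupOfEquivOfLe hb).toEquiv] at hcard
  exact hcard.not_ge (card_le_two_pow_half fun a => Subtype.ext (Subtype.ext (hsq a a.2)))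

lemma card_cube_le_three_pow_card_fiber [Finite Ω] [FaithfulSMul G Ω]
    [MulAction.IsPretransitive P K] (hAP : A ≤ Subgroup.centralizer P)
    (hb : A ≤ MulAction.stabilizer G b) (hA : A ≤ Subgroup.centralizer A) :
    Nat.card A ^ 3 ≤ 3 ^ Nat.card (fiber β b) := by
  have := faithfulSMul_fiber (β := β) (b := b) hAP
  rw [← Nat.card_congr (Subgroup.subgroupOfEquivOfLe hb).toEquiv]
  exact card_cube_le_three_pow fun a a' => Subtype.ext (Subtype.ext (hA a'.2 a a.2))

lemma card_le_factorial_card_fiber [Finite Ω] [FaithfulSMul G Ω] [MulAction.IsPretransitive P K]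
    (hAP : A ≤ Subgroup.centralizer P) (hb : A ≤ MulAction.stabilizer G b) :
    Nat.card A ≤ (Nat.card (fiber β b)).factorial := by
  have := faithfulSMul_fiber (β := β) (b := b) hAP
  rw [← Nat.card_congr (Subgroup.subgroupOfEquivOfLe hb).toEquiv]
  exact card_le_factorial

lemma card_le_mul_card_inf_stabilizer [Finite K] (A : Subgroup G) (b : K) :
    Nat.card A ≤ Nat.card K * Nat.card (A ⊓ MulAction.stabilizer G b : Subgroup G) := by
  have hstab : MulAction.stabilizer A b = (MulAction.stabilizer G b).subgroupOf A := rfl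
  have horbit : (MulAction.stabilizer A b).index ≤ Nat.card K := by
    rw [MulAction.index_stabilizer]
    exact Set.ncard_le_card _
  rw [← Subgroup.index_mul_card (MulAction.stabilizer A b)]
  refine Nat.mul_le_mul horbit (le_of_eq ?_)
  rw [hstab, ← Subgroup.inf_subgroupOf_left, Nat.card_congr
    (Subgroup.subgroupOfEquivOfLe inf_le_left).toEquiv]

end Fibers

section Growth

variable {G K : Type*} [Group G] [MulAction G K]

lemma setoid_eq_bot_or_eq_top [MulAction.IsPreprimitive G K] {s : Setoid K}
    (hs : ∀ (g : G) (b c : K), s b c → s (g • b) (g • c)) : s = ⊥ ∨ s = ⊤ := by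
  have hblock (c : K) : MulAction.IsBlock G {b | s b c} := by
    refine MulAction.isBlock_iff_smul_eq_or_disjoint.2 fun g =>
      or_iff_not_imp_right.2 fun hdis => ?_
    obtain ⟨_, ⟨b, hb, rfl⟩, hgb⟩ := Set.not_disjoint_iff.1 hdis
    have hgc : s (g • c) c := s.trans (s.symm (hs g b c hb)) hgb
    refine Set.ext fun d => Set.mem_smul_set_iff_inv_smul_mem.trans ⟨fun hd => ?_, fun hd => ?_⟩
    · simpa using s.trans (hs g _ _ hd) (by simpa using hgc)
    · simpa using hs g⁻¹ _ _ (s.trans hd (s.symm hgc))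
  refine or_iff_not_imp_right.2 fun htop => Setoid.ext fun b c => ⟨fun hbc => ?_, fun hbc => ?_⟩
  · rcases (hblock c).subsingleton_or_eq_univ with hsub | huniv
    · exact hsub hbc (s.refl c)
    · refine absurd (Setoid.ext fun d e => ⟨fun _ => trivial, fun _ => ?_⟩) htop
      exact s.trans (huniv.ge (Set.mem_univ d)) (s.symm (huniv.ge (Set.mem_univ e)))
  · exact hbc ▸ s.refl b

lemma two_mul_card_orbits_zpowers [Finite K] {g : G} (hg : orderOf g = 2) :
    2 * Nat.card (MulAction.orbitRel.Quotient (Subgroup.zpowers g) K) =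
      Nat.card K + Nat.card (MulAction.fixedBy K g) := by
  classical
  have := Fintype.ofFinite K
  have : Finite (Subgroup.zpowers g) :=
    Nat.finite_of_card_ne_zero (by rw [Nat.card_zpowers, hg]; exact two_ne_zero)
  have := Fintype.ofFinite (Subgroup.zpowers g)
  have hcard : Fintype.card (Subgroup.zpowers g) = 2 := by
    rw [← Nat.card_eq_fintype_card, Nat.card_zpowers, hg]
  have hne : (1 : Subgroup.zpowers g) ≠ ⟨g, Subgroup.mem_zpowers g⟩ := fun h1 => by
    have hg1 : g = 1 := (congrArg Subtype.val h1).symm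
    simp [hg1] at hg
  have huniv : (Finset.univ : Finset (Subgroup.zpowers g)) = {1, ⟨g, Subgroup.mem_zpowers g⟩} :=
    (Finset.eq_univ_of_card _ (by rw [Finset.card_pair hne, hcard])).symm
  have hburnside := MulAction.sum_card_fixedBy_eq_card_orbits_mul_card_group (Subgroup.zpowers g) K
  rw [huniv, Finset.sum_pair hne, hcard, ← Nat.card_eq_fintype_card, ← Nat.card_eq_fintype_card,
    ← Nat.card_eq_fintype_card] at hburnside
  have hone : Nat.card (MulAction.fixedBy K (1 : Subgroup.zpowers g)) = Nat.card K := by simp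
  rw [hone] at hburnside
  exact (mul_comm _ _).trans hburnside.symm

lemma card_orbits_lt [Finite K] {P Q : Subgroup G} (hPQ : P ≤ Q) {g : G} (hg : g ∈ Q) {x : K}
    (hx : g • x ∉ MulAction.orbit P x) :
    Nat.card (MulAction.orbitRel.Quotient Q K) < Nat.card (MulAction.orbitRel.Quotient P K) := by
  have := Fintype.ofFinite (MulAction.orbitRel.Quotient P K)
  have := Fintype.ofFinite (MulAction.orbitRel.Quotient Q K)
  have hle : MulAction.orbitRel P K ≤ MulAction.orbitRel Q K := by
    rintro y z ⟨p, rfl⟩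
    exact ⟨⟨p, hPQ p.2⟩, rfl⟩
  rw [Nat.card_eq_fintype_card, Nat.card_eq_fintype_card]
  refine Fintype.card_lt_of_surjective_not_injective
    (Quotient.map' (s₁ := MulAction.orbitRel P K) (s₂ := MulAction.orbitRel Q K) id hle)
    (Quotient.ind' fun y => ⟨Quotient.mk'' y, rfl⟩) fun hinj => hx (Quotient.exact' (hinj ?_))
  exact Quotient.sound' ⟨⟨g, hg⟩, rfl⟩

variable {σ : ℕ → G} {r a b j : ℕ} {x : K}

namespace IsStringCGroup

lemma setoid_eq_bot_or_eq_top [MulAction.IsPreprimitive G K] (h : IsStringCGroup σ r)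
    {s : Setoid K} (hs : ∀ i < r, ∀ b c : K, s b c → s (σ i • b) (σ i • c)) : s = ⊥ ∨ s = ⊤ := by
  have hiff (g : G) (hg : g ∈ parabolic σ (range r)) : ∀ b c : K, s (g • b) (g • c) ↔ s b c := by
    induction hg using Subgroup.closure_induction with
    | mem _ hi =>
      obtain ⟨i, hi, rfl⟩ := hi
      have hir : i < r := Finset.mem_range.1 hi
      refine fun b c => ⟨fun hbc => ?_, hs i hir b c⟩
      simpa [smul_smul, h.mul_self i hir] using hs i hir _ _ hbc
    | one => simp
    | mul g g' _ _ hg hg' => exact fun b c => by rw [mul_smul, mul_smul, hg, hg']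
    | inv g _ hg => exact fun b c => by rw [← hg, smul_inv_smul, smul_inv_smul]
  exact StringCGroup.setoid_eq_bot_or_eq_top fun g b c =>
    (hiff g (h.parabolic_range ▸ Subgroup.mem_top g) b c).2

lemma exists_smul_ne [MulAction.IsPretransitive G K] [Nontrivial K] (h : IsStringCGroup σ r) :
    ∃ j < r, ∃ b : K, σ j • b ≠ b := by
  by_contra! hfix
  obtain ⟨b, c, hbc⟩ := exists_pair_ne K
  obtain ⟨g, rfl⟩ := MulAction.exists_smul_eq G b c
  have hle : parabolic σ (range r) ≤ MulAction.stabilizer G b :=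
    parabolic_le_iff.2 fun i hi => hfix i (Finset.mem_range.1 hi) b
  rw [h.parabolic_range] at hle
  exact hbc (hle (Subgroup.mem_top g)).symm

lemma exists_fusing_neighbour [MulAction.IsPreprimitive G K] (h : IsStringCGroup σ r)
    (hj : j ∈ Finset.Icc a b) (hx : σ j • x ≠ x) (hbr : b < r)
    (hnt : ¬ MulAction.IsPretransitive (parabolic σ (Finset.Icc a b)) K) :
    ∃ i < r, (i + 1 = a ∨ i = b + 1) ∧
      ∃ y : K, σ i • y ∉ MulAction.orbit (parabolic σ (Finset.Icc a b)) y := by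
  set P := parabolic σ (Finset.Icc a b)
  have hbot : MulAction.orbitRel P K ≠ ⊥ := fun hbot => hx <| by
    have horbit : MulAction.orbitRel P K (σ j • x) x := ⟨⟨σ j, mem_parabolic hj⟩, rfl⟩
    rwa [hbot] at horbit
  have htop : MulAction.orbitRel P K ≠ ⊤ := fun htop => hnt <| by
    refine ⟨fun y z => ?_⟩
    have horbit : MulAction.orbitRel P K z y := htop ▸ trivial
    exact horbit
  by_contra! hcon
  refine (h.setoid_eq_bot_or_eq_top (s := MulAction.orbitRel P K)
    fun i hi y z hyz => ?_).elim hbot htop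
  by_cases hnear : i ∈ Finset.Icc a b ∨ i + 1 = a ∨ i = b + 1
  · have hself : ∀ w : K, MulAction.orbitRel P K (σ i • w) w :=
      hnear.elim (fun hi' w => ⟨⟨σ i, mem_parabolic hi'⟩, rfl⟩) (hcon i hi)
    exact Setoid.trans' _ (hself y) (Setoid.trans' _ hyz (Setoid.symm' _ (hself z)))
  · obtain ⟨p, rfl⟩ := hyz
    have hcomm : Commute (σ i) p := (parabolic_le_centralizer (S := Finset.Icc a b) (T := {i})
      (fun k hk i' hi' => by
        obtain rfl := Finset.mem_singleton.1 hi'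
        rw [Finset.mem_Icc] at hk hnear
        exact h.commute_of_apart (by omega) hi (by omega)) p.2 _
      (mem_parabolic (Finset.mem_singleton_self i)))
    refine ⟨p, ?_⟩
    change p.1 • σ i • z = σ i • p.1 • z
    rw [smul_smul, smul_smul, hcomm.eq]

lemma exists_extension_card_orbits_lt [Finite K] [MulAction.IsPreprimitive G K]
    (h : IsStringCGroup σ r) (hj : j ∈ Finset.Icc a b) (hx : σ j • x ≠ x) (hbr : b < r)
    (hnt : ¬ MulAction.IsPretransitive (parabolic σ (Finset.Icc a b)) K) :
    ∃ a' ≤ a, ∃ b' ≥ b, b' < r ∧ b' - a' = b - a + 1 ∧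
      Nat.card (MulAction.orbitRel.Quotient (parabolic σ (Finset.Icc a' b')) K) <
        Nat.card (MulAction.orbitRel.Quotient (parabolic σ (Finset.Icc a b)) K) := by
  have hab : a ≤ b := Finset.nonempty_Icc.1 ⟨j, hj⟩
  obtain ⟨i, hi, hia, y, hy⟩ := h.exists_fusing_neighbour hj hx hbr hnt
  have hlt (a' b' : ℕ) (ha : a' ≤ a) (hb : b ≤ b') (hi' : i ∈ Finset.Icc a' b') :=
    card_orbits_lt (parabolic_mono (σ := σ) (Finset.Icc_subset_Icc ha hb)) (mem_parabolic hi') hy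
  rcases hia with rfl | rfl
  · exact ⟨i, by omega, b, le_rfl, hbr, by omega, hlt _ _ (by omega) le_rfl (by simp; omega)⟩
  · exact ⟨a, le_rfl, b + 1, by omega, hi, by omega, hlt _ _ le_rfl (by omega) (by simp; omega)⟩

lemma exists_transitive_extension [Finite K] [MulAction.IsPreprimitive G K]
    (h : IsStringCGroup σ r) (hj : j ∈ Finset.Icc a b) (hx : σ j • x ≠ x) (hbr : b < r) :
    ∃ a' ≤ a, ∃ b' ≥ b, b' < r ∧
      MulAction.IsPretransitive (parabolic σ (Finset.Icc a' b')) K ∧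
      b' - a' + 1 ≤
        b - a + Nat.card (MulAction.orbitRel.Quotient (parabolic σ (Finset.Icc a b)) K) := by
  induction hN : Nat.card (MulAction.orbitRel.Quotient (parabolic σ (Finset.Icc a b)) K)
    using Nat.strong_induction_on generalizing a b with
  | _ N ih =>
    by_cases ht : MulAction.IsPretransitive (parabolic σ (Finset.Icc a b)) K
    · have : Nonempty (MulAction.orbitRel.Quotient (parabolic σ (Finset.Icc a b)) K) :=
        ⟨Quotient.mk'' x⟩
      have hpos : 0 < N := hN ▸ Nat.card_pos
      exact ⟨a, le_rfl, b, le_rfl, hbr, ht, by omega⟩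
    · obtain ⟨a₁, ha₁, b₁, hb₁, hbr₁, hlen, hlt⟩ := h.exists_extension_card_orbits_lt hj hx hbr ht
      obtain ⟨a', ha', b', hb', hbr', ht', hlen'⟩ :=
        ih _ (hN ▸ hlt) (Finset.Icc_subset_Icc ha₁ hb₁ hj) hbr₁ rfl
      exact ⟨a', ha'.trans ha₁, b', hb₁.trans hb', hbr', ht', by omega⟩

lemma exists_transitive_interval [Finite K] [MulAction.IsPreprimitive G K]
    (h : IsStringCGroup σ r) (hj : j < r) (hx : σ j • x ≠ x) :
    ∃ a ≤ j, ∃ b ≥ j, b < r ∧ MulAction.IsPretransitive (parabolic σ (Finset.Icc a b)) K ∧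
      2 * (b - a + 1) ≤ Nat.card K + Nat.card (MulAction.fixedBy K (σ j)) := by
  obtain ⟨a, ha, b, hb, hbr, ht, hlen⟩ :=
    h.exists_transitive_extension (Finset.mem_Icc.2 ⟨le_rfl, le_rfl⟩) hx hj
  have horder : orderOf (σ j) = 2 :=
    orderOf_eq_prime ((pow_two _).trans (h.mul_self j hj)) (h.ne_one j hj)
  have hpar : parabolic σ (Finset.Icc j j) = Subgroup.zpowers (σ j) := by
    simp [parabolic, Subgroup.zpowers_eq_closure]
  rw [hpar] at hlen
  have := two_mul_card_orbits_zpowers (K := K) horder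
  exact ⟨a, ha, b, hb, hbr, ht, by omega⟩

end IsStringCGroup

end Growth

section OuterGenerators

/-- The indices below `r` at distance at least two from the interval `[a, b]`. -/
def outer (a b r : ℕ) : Finset ℕ := (range r).filter fun i => i + 1 < a ∨ b + 1 < i

variable {a b i r : ℕ}

lemma mem_outer : i ∈ outer a b r ↔ i < r ∧ (i + 1 < a ∨ b + 1 < i) := by simp [outer]

lemma outer_subset_range : outer a b r ⊆ range r := Finset.filter_subset _ _

lemma Icc_subset_range (hbr : b < r) : Finset.Icc a b ⊆ range r := fun _ hi =>
  Finset.mem_range.2 ((Finset.mem_Icc.1 hi).2.trans_lt hbr)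

lemma isApart_outer_Icc : IsApart (outer a b r) (Finset.Icc a b) := fun i hi j hj => by
  rw [mem_outer] at hi
  rw [Finset.mem_Icc] at hj
  omega

lemma le_card_outer_add (hab : a ≤ b) : r ≤ (outer a b r).card + (b - a + 1) + 2 := by
  have hcover : range r ⊆ Finset.Icc (a - 1) (b + 1) ∪ outer a b r := by
    intro i hi
    simp only [Finset.mem_union, Finset.mem_Icc, mem_outer]
    have := Finset.mem_range.1 hi
    omega
  have hcard := (Finset.card_le_card hcover).trans (Finset.card_union_le _ _)
  rw [Finset.card_range, Nat.card_Icc] at hcard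
  omega

lemma exists_isSparse_subset (C : Finset ℕ) : ∃ T ⊆ C, C.card ≤ 2 * T.card ∧ IsSparse T := by
  have hcard := Finset.card_filter_add_card_filter_not (s := C) (fun i => i % 2 = 0)
  rcases le_total (C.filter fun i => ¬ i % 2 = 0).card (C.filter fun i => i % 2 = 0).card with h | h
  · refine ⟨_, Finset.filter_subset (fun i => i % 2 = 0) C, by omega, fun i hi j hj => ?_⟩
    rw [Finset.mem_filter] at hi hj
    omega
  · refine ⟨_, Finset.filter_subset (fun i => ¬ i % 2 = 0) C, by omega, fun i hi j hj => ?_⟩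
    rw [Finset.mem_filter] at hi hj
    omega

end OuterGenerators

section Bounds

variable {G Ω K : Type*} [Group G] [MulAction G Ω] [MulAction G K] {σ : ℕ → G} {r ℓ j : ℕ}
  {J T : Finset ℕ} {β : Ω →[G] K}

lemma parabolic_le_stabilizer (hfix : ∀ i ∈ T, ∀ b : K, σ i • b = b) (b : K) :
    parabolic σ T ≤ MulAction.stabilizer G b :=
  parabolic_le_iff.2 fun i hi => hfix i hi b

lemma even_card_of_fixedPointFree [Finite K] {g : G} (hg : g * g = 1)
    (hfree : ∀ b : K, g • b ≠ b) : Even (Nat.card K) := by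
  classical
  have := Fintype.ofFinite K
  have : Fact (Nat.Prime 2) := ⟨Nat.prime_two⟩
  have hmod := Equiv.Perm.card_fixedPoints_modEq (f := fun b : K => g • b) (p := 2) (n := 1)
    (funext fun b => (smul_smul g g b).trans (by rw [hg, one_smul]; rfl))
  have hzero : Fintype.card (Function.fixedPoints fun b : K => g • b) = 0 :=
    Fintype.card_eq_zero_iff.2 ⟨fun b => hfree b.1 b.2⟩
  rw [hzero] at hmod
  rw [Nat.card_eq_fintype_card]
  exact Nat.even_iff.2 hmod

lemma card_fixedBy_add_two_le [Finite K] {g : G} {b : K} (hb : g • b ≠ b) :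
    Nat.card (MulAction.fixedBy K g) + 2 ≤ Nat.card K := by
  have hsub : ({b, g • b} : Set K) ⊆ (MulAction.fixedBy K g)ᶜ := by
    rintro c (rfl | rfl)
    · exact hb
    · exact fun hc => hb (smul_left_cancel g hc)
  have hle := Set.ncard_le_ncard hsub
  rw [Set.ncard_pair hb.symm] at hle
  have hsum := Set.ncard_add_ncard_compl (MulAction.fixedBy K g)
  rw [Nat.card_coe_set_eq]
  omega

namespace IsStringCGroup

lemma two_pow_card_le_card_mul_two_pow_half [Finite G] [Finite Ω] [Finite K] [Nonempty K]
    [FaithfulSMul G Ω] [MulAction.IsPretransitive (parabolic σ J) K] (h : IsStringCGroup σ r)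
    (hβ : ∀ b, Nat.card (fiber β b) = ℓ) (hJ : J ⊆ range r) (hT : T ⊆ range r)
    (hsparse : IsSparse T) (hTJ : IsApart T J) : 2 ^ T.card ≤ Nat.card K * 2 ^ (ℓ / 2) := by
  obtain ⟨b⟩ := ‹Nonempty K›
  refine (h.two_pow_card_le hT).trans
    ((card_le_mul_card_inf_stabilizer _ b).trans (Nat.mul_le_mul_left _ ?_))
  exact hβ b ▸ card_le_two_pow_half_card_fiber
    (inf_le_left.trans (h.le_centralizer_of_isApart hT hJ hTJ)) inf_le_right
    fun a ha => h.mul_self_of_isSparse hT hsparse ha.1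

lemma two_pow_card_le_card_mul_factorial [Finite G] [Finite Ω] [Finite K] [Nonempty K]
    [FaithfulSMul G Ω] [MulAction.IsPretransitive (parabolic σ J) K] (h : IsStringCGroup σ r)
    (hβ : ∀ b, Nat.card (fiber β b) = ℓ) (hJ : J ⊆ range r) (hT : T ⊆ range r)
    (hTJ : IsApart T J) : 2 ^ T.card ≤ Nat.card K * ℓ.factorial := by
  obtain ⟨b⟩ := ‹Nonempty K›
  refine (h.two_pow_card_le hT).trans
    ((card_le_mul_card_inf_stabilizer _ b).trans (Nat.mul_le_mul_left _ ?_))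
  exact hβ b ▸ card_le_factorial_card_fiber
    (inf_le_left.trans (h.le_centralizer_of_isApart hT hJ hTJ)) inf_le_right

lemma card_le_half_of_smul_eq [Finite G] [Finite Ω] [Nonempty K] [FaithfulSMul G Ω]
    [MulAction.IsPretransitive (parabolic σ J) K] (h : IsStringCGroup σ r)
    (hβ : ∀ b, Nat.card (fiber β b) = ℓ) (hJ : J ⊆ range r) (hT : T ⊆ range r)
    (hsparse : IsSparse T) (hTJ : IsApart T J) (hfix : ∀ i ∈ T, ∀ b : K, σ i • b = b) :
    T.card ≤ ℓ / 2 := by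
  obtain ⟨b⟩ := ‹Nonempty K›
  refine (Nat.pow_le_pow_iff_right one_lt_two).1 ((h.two_pow_card_le hT).trans ?_)
  exact hβ b ▸ card_le_two_pow_half_card_fiber (h.le_centralizer_of_isApart hT hJ hTJ)
    (parabolic_le_stabilizer hfix b) fun a => h.mul_self_of_isSparse hT hsparse

lemma two_pow_card_le_factorial_of_smul_eq [Finite G] [Finite Ω] [Nonempty K] [FaithfulSMul G Ω]
    [MulAction.IsPretransitive (parabolic σ J) K] (h : IsStringCGroup σ r)
    (hβ : ∀ b, Nat.card (fiber β b) = ℓ) (hJ : J ⊆ range r) (hT : T ⊆ range r)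
    (hTJ : IsApart T J) (hfix : ∀ i ∈ T, ∀ b : K, σ i • b = b) : 2 ^ T.card ≤ ℓ.factorial := by
  obtain ⟨b⟩ := ‹Nonempty K›
  exact (h.two_pow_card_le hT).trans <| hβ b ▸ card_le_factorial_card_fiber
    (h.le_centralizer_of_isApart hT hJ hTJ) (parabolic_le_stabilizer hfix b)

lemma smul_ne_of_isApart [MulAction.IsPretransitive (parabolic σ J) K] (h : IsStringCGroup σ r)
    (hJ : J ⊆ range r) (hj : j < r) (hjJ : IsApart {j} J) {b : K} (hb : σ j • b ≠ b) (c : K) :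
    σ j • c ≠ c := fun hc =>
  hb <| smul_eq_of_le_centralizer (h.le_centralizer_of_isApart (by simpa using hj) hJ hjJ)
    (mem_parabolic (Finset.mem_singleton_self j)) hc b

end IsStringCGroup

end Bounds

section ThreeOrMoreBlocks

lemma two_mul_le_two_pow {t : ℕ} (ht : 2 ≤ t) : 2 * t ≤ 2 ^ t := by
  induction t, ht using Nat.le_induction with
  | base => norm_num
  | succ n _ ih => rw [pow_succ]; omega

lemma two_mul_lt_two_pow {t : ℕ} (ht : 3 ≤ t) : 2 * t < 2 ^ t := by
  induction t, ht using Nat.le_induction with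
  | base => norm_num
  | succ n _ ih => rw [pow_succ]; omega

/-- The numerical contradiction when an outer generator moves all of `2 * t` blocks of size `ℓ`: the
interval grown from it has at most `t` members, leaving `C` outer ones, of which `s` pairwise
commute. -/
lemma false_of_fixedPointFree_bounds {t ℓ C s : ℕ} (ht : 2 ≤ t) (hℓ : 2 ≤ ℓ)
    (hkl : 9 ≤ 2 * t * ℓ) (hC : 2 * t * ℓ ≤ C + t + 5) (hs : C ≤ 2 * s)
    (hfact : 2 ^ C ≤ 2 * t * ℓ.factorial) (hsparse : 2 ^ s ≤ 2 * t * 2 ^ (ℓ / 2)) : False := by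
  rcases Nat.lt_or_ge ℓ 4 with hℓ4 | hℓ4
  · interval_cases ℓ
    · have hpow := (Nat.pow_le_pow_right two_pos (show t + 1 ≤ C by omega)).trans hfact
      have hlt := two_mul_lt_two_pow (t := t) (by omega)
      rw [pow_succ, (by decide : Nat.factorial 2 = 2)] at hpow
      omega
    · have hpow := (Nat.pow_le_pow_right two_pos (show t + 3 ≤ C by omega)).trans hfact
      have hle := two_mul_le_two_pow ht
      rw [pow_add, (by decide : Nat.factorial 3 = 6)] at hpow
      omega
  · have hpow : 2 ^ s ≤ 2 ^ (t + ℓ / 2) := by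
      rw [pow_add]
      exact hsparse.trans (Nat.mul_le_mul_right _ (two_mul_le_two_pow ht))
    have hst := (Nat.pow_le_pow_iff_right one_lt_two).1 hpow
    have hprod : 2 * ℓ + 4 * t ≤ t * ℓ + 8 := by nlinarith
    have hhalf : ℓ / 2 * 2 ≤ ℓ := Nat.div_mul_le_self _ _
    rw [mul_assoc] at hC
    omega

lemma eq_of_three_le_bounds {k ℓ C : ℕ} (hk : 3 ≤ k) (hℓ : 2 ≤ ℓ) (hkl : 9 ≤ k * ℓ)
    (hC : k * ℓ ≤ C + k + 4) (hhalf : C ≤ 2 * (ℓ / 2)) (hfact : 2 ^ C ≤ ℓ.factorial) :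
    k = 3 ∧ ℓ = 3 ∨ k = 5 ∧ ℓ = 2 := by
  rcases Nat.lt_or_ge ℓ 4 with hℓ4 | hℓ4
  · interval_cases ℓ
    · have : C ≤ 1 := (Nat.pow_le_pow_iff_right one_lt_two).1 (hfact.trans (by decide))
      omega
    · omega
  · have hprod : 4 * k + 3 * ℓ ≤ k * ℓ + 12 := by nlinarith
    omega

variable {G Ω K : Type*} [Group G] [MulAction G Ω] [MulAction G K] {σ : ℕ → G} {r ℓ a b c j : ℕ}
  {β : Ω →[G] K} {x : K}

namespace IsStringCGroup

lemma smul_eq_of_mem_outer [Finite G] [Finite Ω] [Finite K] [FaithfulSMul G Ω]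
    [MulAction.IsPreprimitive G K] (h : IsStringCGroup σ r) (hβ : ∀ b, Nat.card (fiber β b) = ℓ)
    (hk : 3 ≤ Nat.card K) (hℓ : 2 ≤ ℓ) (hkl : 9 ≤ Nat.card K * ℓ) (hr : Nat.card K * ℓ ≤ r + 3)
    (hbr : b < r) [MulAction.IsPretransitive (parabolic σ (Finset.Icc a b)) K]
    (hc : c ∈ outer a b r) (x : K) : σ c • x = x := by
  by_contra hx
  have : Nonempty K := ⟨x⟩
  have hcr : c < r := (mem_outer.1 hc).1
  have hfree : ∀ y : K, σ c • y ≠ y := h.smul_ne_of_isApart (Icc_subset_range hbr) hcr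
    (fun i hi => Finset.mem_singleton.1 hi ▸ isApart_outer_Icc c hc) hx
  obtain ⟨t, ht⟩ := even_card_of_fixedPointFree (h.mul_self c hcr) hfree
  have hfixed : Nat.card (MulAction.fixedBy K (σ c)) = 0 :=
    Nat.card_eq_zero.2 (Or.inl ⟨fun y => hfree y.1 y.2⟩)
  obtain ⟨a', ha', b', hb', hbr', _, hlen⟩ := h.exists_transitive_interval hcr hx
  have hcount := le_card_outer_add (r := r) (ha'.trans hb')
  obtain ⟨T, hTC, hcard, hsparse⟩ := exists_isSparse_subset (outer a' b' r)
  have hfact := h.two_pow_card_le_card_mul_factorial hβ (Icc_subset_range (a := a') hbr')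
    outer_subset_range isApart_outer_Icc
  have hpow := h.two_pow_card_le_card_mul_two_pow_half hβ (Icc_subset_range (a := a') hbr')
    (hTC.trans outer_subset_range) hsparse fun i hi => isApart_outer_Icc i (hTC hi)
  rw [← two_mul] at ht
  rw [ht] at hkl hr hfact hpow hlen
  exact false_of_fixedPointFree_bounds (by omega) hℓ hkl (by omega) hcard hfact hpow

lemma exists_interval_of_three_le [Finite G] [Finite Ω] [Finite K] [FaithfulSMul G Ω]
    [MulAction.IsPreprimitive G K] (h : IsStringCGroup σ r) (hβ : ∀ b, Nat.card (fiber β b) = ℓ)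
    (hk : 3 ≤ Nat.card K) (hℓ : 2 ≤ ℓ) (hkl : 9 ≤ Nat.card K * ℓ) (hr : Nat.card K * ℓ ≤ r + 3)
    (hj : j < r) (hx : σ j • x ≠ x) : ∃ a ≤ j, ∃ b ≥ j, b < r ∧
      MulAction.IsPretransitive (parabolic σ (Finset.Icc a b)) K ∧
      2 * (b - a + 1) ≤ Nat.card K + Nat.card (MulAction.fixedBy K (σ j)) ∧
      (∀ c ∈ outer a b r, ∀ y : K, σ c • y = y) ∧ (outer a b r).card ≤ 2 * (ℓ / 2) := by
  have : Nonempty K := ⟨x⟩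
  obtain ⟨a, ha, b, hb, hbr, hP, hlen⟩ := h.exists_transitive_interval hj hx
  have hfix : ∀ c ∈ outer a b r, ∀ y : K, σ c • y = y := fun c hc =>
    h.smul_eq_of_mem_outer hβ hk hℓ hkl hr hbr hc
  obtain ⟨T, hTC, hcard, hsparse⟩ := exists_isSparse_subset (outer a b r)
  have hhalf := h.card_le_half_of_smul_eq hβ (Icc_subset_range hbr)
    (hTC.trans outer_subset_range) hsparse (fun i hi => isApart_outer_Icc i (hTC hi))
    fun i hi => hfix i (hTC hi)
  exact ⟨a, ha, b, hb, hbr, hP, hlen, hfix, by omega⟩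

lemma card_eq_of_three_le [Finite G] [Finite Ω] [Finite K] [FaithfulSMul G Ω]
    [MulAction.IsPreprimitive G K] (h : IsStringCGroup σ r) (hβ : ∀ b, Nat.card (fiber β b) = ℓ)
    (hk : 3 ≤ Nat.card K) (hℓ : 2 ≤ ℓ) (hkl : 9 ≤ Nat.card K * ℓ) (hr : Nat.card K * ℓ ≤ r + 3) :
    Nat.card K = 3 ∧ ℓ = 3 ∨ Nat.card K = 5 ∧ ℓ = 2 := by
  have : Nontrivial K := Finite.one_lt_card_iff_nontrivial.1 (by omega)
  obtain ⟨j, hj, x, hx⟩ := h.exists_smul_ne (K := K)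
  obtain ⟨a, ha, b, hb, hbr, _, hlen, hfix, hcard⟩ :=
    h.exists_interval_of_three_le hβ hk hℓ hkl hr hj hx
  have hcount := le_card_outer_add (r := r) (ha.trans hb)
  have hfixed := card_fixedBy_add_two_le hx
  exact eq_of_three_le_bounds hk hℓ hkl (by omega) hcard
    (h.two_pow_card_le_factorial_of_smul_eq hβ (Icc_subset_range hbr) outer_subset_range
      isApart_outer_Icc hfix)

end IsStringCGroup

end ThreeOrMoreBlocks

section ThreeBlocksOfSizeThree

lemma perm_eq_one_of_card_three {α : Type*} (hα : Nat.card α = 3) {g c d : Equiv.Perm α}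
    (hgc : Commute g c) (hgd : Commute g d) (hcd : ¬ Commute c d) : g = 1 := by
  have : Finite α := Nat.finite_of_card_ne_zero (by omega)
  let e : Equiv.Perm α ≃* Equiv.Perm (Fin 3) := (Finite.equivFinOfCardEq hα).permCongrHom
  have key : ∀ g c d : Equiv.Perm (Fin 3), g * c = c * g → g * d = d * g → c * d ≠ d * c →
      g = 1 := by decide
  exact (map_eq_one_iff e e.injective).1 <| key (e g) (e c) (e d) (hgc.map e) (hgd.map e)
    fun hcd' => hcd (e.injective (by simpa only [map_mul] using hcd'))

variable {G Ω K : Type*} [Group G] [MulAction G Ω] [MulAction G K] {σ : ℕ → G} {r i j : ℕ}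
  {D : Finset ℕ} {P : Subgroup G} {β : Ω →[G] K} {c d g : G}

lemma eq_one_of_commutes_of_card_fiber [FaithfulSMul G Ω] [MulAction.IsPretransitive P K]
    (hβ : ∀ b, Nat.card (fiber β b) = 3) (hc : c ∈ Subgroup.centralizer (P : Set G))
    (hd : d ∈ Subgroup.centralizer (P : Set G)) (hcK : ∀ b : K, c • b = b)
    (hdK : ∀ b : K, d • b = b) (hcd : ¬ Commute c d) (hg : g ∈ P) (hgK : ∀ b : K, g • b = b) :
    g = 1 := by
  refine eq_of_smul_eq_smul fun x : Ω => ?_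
  let b := β x
  let φ := MulAction.toPermHom (MulAction.stabilizer G b) (fiber β b)
  let c' : MulAction.stabilizer G b := ⟨c, hcK b⟩
  let d' : MulAction.stabilizer G b := ⟨d, hdK b⟩
  let g' : MulAction.stabilizer G b := ⟨g, hgK b⟩
  have hgc : Commute g' c' := Subtype.ext (hc g hg)
  have hgd : Commute g' d' := Subtype.ext (hd g hg)
  have hcd' : ¬ Commute (φ c') (φ d') := fun h => hcd <| by
    let A := Subgroup.closure {c, d}
    have hAP : A ≤ Subgroup.centralizer P :=
      (Subgroup.closure_le _).2 (Set.insert_subset hc (Set.singleton_subset_iff.2 hd))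
    have := faithfulSMul_fiber (β := β) (b := b) hAP
    let c'' : A.subgroupOf (MulAction.stabilizer G b) :=
      ⟨c', Subgroup.subset_closure (Set.mem_insert c {d})⟩
    let d'' : A.subgroupOf (MulAction.stabilizer G b) :=
      ⟨d', Subgroup.subset_closure (Set.mem_insert_of_mem c rfl)⟩
    have hcd'' : c'' * d'' = d'' * c'' :=
      eq_of_smul_eq_smul fun y : fiber β b => (mul_smul c'' d'' y).trans <|
        (DFunLike.congr_fun h.eq y).trans (mul_smul d'' c'' y).symm
    exact congrArg (fun a => a.1.1) hcd''
  have hφ : φ g' = 1 := perm_eq_one_of_card_three (hβ b) (hgc.map φ) (hgd.map φ) hcd'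
  rw [one_smul]
  exact congrArg Subtype.val (DFunLike.congr_fun hφ ⟨x, rfl⟩)

lemma isPretransitive_parabolic_of_subset {J : Finset ℕ} (hJD : J ⊆ D)
    [MulAction.IsPretransitive (parabolic σ J) K] :
    MulAction.IsPretransitive (parabolic σ D) K where
  exists_smul_eq b b' :=
    let ⟨p, hp⟩ := MulAction.exists_smul_eq (parabolic σ J) b b'
    ⟨⟨p, parabolic_mono hJD p.2⟩, hp⟩

namespace IsStringCGroup

lemma commute_of_card_fiber_eq_three [Finite G] [Finite K] [FaithfulSMul G Ω]
    (h : IsStringCGroup σ r) (hβ : ∀ b, Nat.card (fiber β b) = 3) (hK : Nat.card K = 3)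
    (hijr : {i, j} ⊆ range r) (hD : D ⊆ range r) (hDcard : D.card = 3) (hDij : IsApart {i, j} D)
    [MulAction.IsPretransitive (parabolic σ D) K]
    (hfix : ∀ m ∈ ({i, j} : Finset ℕ), ∀ b : K, σ m • b = b) : Commute (σ i) (σ j) := by
  by_contra hij
  have hi : i ∈ ({i, j} : Finset ℕ) := by simp
  have hj : j ∈ ({i, j} : Finset ℕ) := by simp
  have hle := h.le_centralizer_of_isApart hijr hD hDij
  have : FaithfulSMul (parabolic σ D) K := ⟨fun {g g'} hgg' => by
    refine inv_mul_eq_one.1 (Subtype.ext ?_)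
    refine eq_one_of_commutes_of_card_fiber (P := parabolic σ D) hβ
      (hle (mem_parabolic hi)) (hle (mem_parabolic hj)) (hfix i hi) (hfix j hj) hij
      (g⁻¹ * g').2 fun b => ?_
    exact (mul_smul g⁻¹ g' b).trans (inv_smul_eq_iff.2 (hgg' b).symm)⟩
  have hcard := (h.two_pow_card_le hD).trans (card_le_factorial (X := K))
  rw [hDcard, hK] at hcard
  exact absurd hcard (by decide)

lemma not_commute_of_card_fiber_eq_three [Finite G] [Finite Ω] [Nonempty K] [FaithfulSMul G Ω]
    (h : IsStringCGroup σ r) (hβ : ∀ b, Nat.card (fiber β b) = 3) (hij : i ≠ j)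
    (hijr : {i, j} ⊆ range r) (hD : D ⊆ range r) (hDij : IsApart {i, j} D)
    [MulAction.IsPretransitive (parabolic σ D) K] (hfix : ∀ m ∈ ({i, j} : Finset ℕ), ∀ b : K,
      σ m • b = b) : ¬ Commute (σ i) (σ j) := fun hcomm => by
  obtain ⟨b⟩ := ‹Nonempty K›
  have hpair : ∀ m ∈ ({i, j} : Finset ℕ), ∀ n ∈ ({i, j} : Finset ℕ), Commute (σ m) (σ n) := by
    simp [hcomm, hcomm.symm]
  have hcard := (h.two_pow_card_le hijr).trans <| card_le_two_pow_half_card_fiber (β := β)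
    (h.le_centralizer_of_isApart hijr hD hDij) (parabolic_le_stabilizer hfix b)
    fun a => mul_self_eq_one_of_mem_parabolic
      (fun m hm => h.mul_self m (Finset.mem_range.1 (hijr hm))) hpair
  rw [Finset.card_pair hij, hβ] at hcard
  exact absurd hcard (by decide)

lemma false_of_three_blocks_of_size_three [Finite G] [Finite Ω] [Finite K] [FaithfulSMul G Ω]
    [MulAction.IsPreprimitive G K] (h : IsStringCGroup σ r)
    (hβ : ∀ b, Nat.card (fiber β b) = 3) (hK : Nat.card K = 3) (hr : 6 ≤ r) : False := by
  have : Nontrivial K := Finite.one_lt_card_iff_nontrivial.1 (by omega)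
  obtain ⟨j, hj, x, hx⟩ := h.exists_smul_ne (K := K)
  obtain ⟨a, ha, b, hb, hbr, hP, hlen, hfix, hcard⟩ :=
    h.exists_interval_of_three_le hβ hK.ge (by norm_num) (by omega) (by omega) hj hx
  have hcount := le_card_outer_add (r := r) (ha.trans hb)
  have hfixed := card_fixedBy_add_two_le hx
  obtain rfl : r = 6 := by omega
  obtain rfl : b = a + 1 := by omega
  have hncomm (c d : ℕ) (hcd : c ≠ d) (hout : {c, d} ⊆ outer a (a + 1) 6) :
      ¬ Commute (σ c) (σ d) :=
    h.not_commute_of_card_fiber_eq_three hβ hcd (hout.trans outer_subset_range)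
      (Icc_subset_range hbr) (fun i hi => isApart_outer_Icc i (hout hi))
      fun i hi => hfix i (hout hi)
  have hcomm (c d : ℕ) (D : Finset ℕ) (hout : {c, d} ⊆ outer a (a + 1) 6) (hD : D ⊆ range 6)
      (hDcard : D.card = 3) (hcdD : IsApart {c, d} D) (haD : Finset.Icc a (a + 1) ⊆ D) :
      Commute (σ c) (σ d) :=
    have : MulAction.IsPretransitive (parabolic σ D) K :=
      isPretransitive_parabolic_of_subset haD
    h.commute_of_card_fiber_eq_three hβ hK (outer_subset_range.trans' hout) hD hDcard hcdD
      fun i hi => hfix i (hout hi)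
  have ha4 : a ≤ 4 := by omega
  interval_cases a
  · exact absurd hcard (by decide)
  · exact hncomm 4 5 (by decide) (by decide) (hcomm 4 5 {0, 1, 2} (by decide) (by decide)
      (by decide) (by decide) (by decide))
  · exact hncomm 0 5 (by decide) (by decide)
      (h.commute_of_apart (by decide) (by decide) (by decide))
  · exact hncomm 0 1 (by decide) (by decide) (hcomm 0 1 {3, 4, 5} (by decide) (by decide)
      (by decide) (by decide) (by decide))
  · exact absurd hcard (by decide)

end IsStringCGroup

end ThreeBlocksOfSizeThree

section FiveBlocksOfSizeTwo

open scoped Pointwise symmDiff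

variable {G Ω K : Type*} [Group G] [MulAction G Ω] [MulAction G K] {σ : ℕ → G} {r j u v z : ℕ}
  {β : Ω →[G] K} {g g' : G} {b c : K} {S : Set K} {x y w : Ω}

lemma eq_empty_or_univ_of_smul_eq [MulAction.IsPretransitive G K] (hS : ∀ g : G, g • S = S) :
    S = ∅ ∨ S = Set.univ := by
  refine S.eq_empty_or_nonempty.imp_right fun ⟨b, hb⟩ => Set.eq_univ_of_forall fun c => ?_
  obtain ⟨g, rfl⟩ := MulAction.exists_smul_eq G b c
  exact hS g ▸ Set.smul_mem_smul_set hb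

lemma smul_set_eq_of_forall_smul_eq (hg : ∀ b : K, g • b = b) (S : Set K) : g • S = S :=
  (Set.image_congr fun b _ => hg b).trans (Set.image_id S)

lemma mem_of_forall_pair_mem [Finite K] (hK : Odd (Nat.card K)) {𝒱 : Set (Set K)}
    (hsymm : ∀ S ∈ 𝒱, ∀ T ∈ 𝒱, S ∆ T ∈ 𝒱) (huniv : Set.univ ∈ 𝒱)
    (hpair : ∀ b c : K, {b} ∆ {c} ∈ 𝒱) (S : Set K) : S ∈ 𝒱 := by
  classical
  have := Fintype.ofFinite K
  have hempty : ∅ ∈ 𝒱 := by simpa using hsymm _ huniv _ huniv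
  have hinsert {a : K} {T : Set K} (ha : a ∉ T) : insert a T = T ∆ {a} := by
    rw [(Set.disjoint_singleton_right.2 ha).symmDiff_eq_sup]
    exact Set.union_singleton.symm
  have hparity (T : Finset K) :
      (Even T.card → (T : Set K) ∈ 𝒱) ∧ (Odd T.card → ∀ b : K, (T : Set K) ∆ {b} ∈ 𝒱) := by
    induction T using Finset.induction_on with
    | empty => simpa using hempty
    | insert a T ha ih =>
      rw [Finset.card_insert_of_notMem ha, Nat.even_add_one, Nat.odd_add_one, Finset.coe_insert,
        hinsert (mt Finset.mem_coe.1 ha), Nat.not_even_iff_odd, Nat.not_odd_iff_even]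
      refine ⟨fun hodd => ih.2 hodd a, fun heven b => ?_⟩
      rw [symmDiff_assoc]
      exact hsymm _ (ih.1 heven) _ (hpair a b)
  have hsingleton (b : K) : {b} ∈ 𝒱 := by
    rw [Nat.card_eq_fintype_card, ← Finset.card_univ] at hK
    have := hsymm _ huniv _ ((hparity Finset.univ).2 hK b)
    rwa [Finset.coe_univ, symmDiff_symmDiff_cancel_left] at this
  induction S, S.toFinite using Set.Finite.induction_on with
  | empty => exact hempty
  | @insert a T ha _ ih => exact hinsert ha ▸ hsymm _ ih _ (hsingleton a)

/-- The blocks not fixed pointwise by `g`. On elements fixing every block, for blocks of size two,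
this identifies the group with a subspace of the `𝔽₂`-space of all sets of blocks. -/
def blockSupp (β : Ω →[G] K) (g : G) : Set K := β '' (MulAction.fixedBy Ω g)ᶜ

lemma smul_blockSupp (g g' : G) : g • blockSupp β g' = blockSupp β (g * g' * g⁻¹) := by
  rw [blockSupp, blockSupp, ← MulAction.smul_fixedBy, ← Set.smul_set_compl, image_smul_set]

lemma blockSupp_eq_empty [FaithfulSMul G Ω] : blockSupp β g = ∅ ↔ g = 1 := by
  rw [blockSupp, Set.image_eq_empty, Set.compl_empty_iff, MulAction.fixedBy_eq_univ_iff_eq_one]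

lemma blockSupp_eq_univ [FaithfulSMul G Ω] {P : Subgroup G} [MulAction.IsPretransitive P K]
    (hg : g ∈ Subgroup.centralizer (P : Set G)) (hne : g ≠ 1) : blockSupp β g = Set.univ :=
  (eq_empty_or_univ_of_smul_eq (G := P) fun p => (smul_blockSupp (p : G) g).trans <| by
    rw [hg p p.2, mul_inv_cancel_right]).resolve_left (mt blockSupp_eq_empty.1 hne)

lemma eq_or_eq_of_card_fiber (hβ : ∀ b, Nat.card (fiber β b) = 2) (hy : β y = β x) (hne : y ≠ x)
    (hw : β w = β x) : w = x ∨ w = y := by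
  refine or_iff_not_imp_left.2 fun hwx => congrArg Subtype.val <|
    ((Nat.card_eq_two_iff' (⟨x, rfl⟩ : fiber β (β x))).1 (hβ (β x))).unique
      (y₁ := ⟨w, hw⟩) (y₂ := ⟨y, hy⟩) ?_ ?_
  · exact fun h => hwx (congrArg Subtype.val h)
  · exact fun h => hne (congrArg Subtype.val h)

lemma mem_blockSupp (hβ : ∀ b, Nat.card (fiber β b) = 2) (hg : ∀ b : K, g • b = b) :
    β x ∈ blockSupp β g ↔ g • x ≠ x := by
  refine ⟨fun ⟨y, hy, hyx⟩ hx => ?_, fun hx => ⟨x, hx, rfl⟩⟩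
  have hne : y ≠ x := fun h => hy (h ▸ hx)
  rcases eq_or_eq_of_card_fiber hβ hyx hne (w := g • y) (by rw [map_smul, hg, hyx]) with h | h
  · exact hne (smul_left_cancel g (h.trans hx.symm))
  · exact hy h

lemma eq_of_blockSupp_eq [FaithfulSMul G Ω] (hβ : ∀ b, Nat.card (fiber β b) = 2)
    (hg : ∀ b : K, g • b = b) (hg' : ∀ b : K, g' • b = b) (h : blockSupp β g = blockSupp β g') :
    g = g' := by
  refine eq_of_smul_eq_smul fun x : Ω => ?_
  have hiff : g • x ≠ x ↔ g' • x ≠ x := by rw [← mem_blockSupp hβ hg, h, mem_blockSupp hβ hg']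
  by_cases hx : g • x = x
  · rw [hx, not_not.1 (hiff.not.1 (not_not.2 hx))]
  · exact ((eq_or_eq_of_card_fiber hβ (by rw [map_smul, hg]) hx
      (by rw [map_smul, hg'])).resolve_left (hiff.1 hx)).symm

lemma blockSupp_mul (hβ : ∀ b, Nat.card (fiber β b) = 2) (hg : ∀ b : K, g • b = b)
    (hg' : ∀ b : K, g' • b = b) : blockSupp β (g * g') = blockSupp β g ∆ blockSupp β g' := by
  have hgg' (b : K) : (g * g') • b = b := by rw [mul_smul, hg', hg]
  ext b
  obtain ⟨x, rfl⟩ : ∃ x, β x = b := by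
    have : Nonempty (fiber β b) := (Nat.card_pos_iff.1 (by rw [hβ]; norm_num)).1
    exact ⟨this.some, this.some.2⟩
  rw [Set.mem_symmDiff, mem_blockSupp hβ hg, mem_blockSupp hβ hg', mem_blockSupp hβ hgg', mul_smul]
  by_cases hx : g' • x = x
  · simp [hx]
  by_cases hgx : g • x = x
  · have : g • g' • x ≠ x := fun h => hx (smul_left_cancel g (h.trans hgx.symm))
    simp [hx, hgx, this]
  · have : g • g' • x = x :=
      (eq_or_eq_of_card_fiber hβ (by rw [map_smul, hg]) hgx
        (by rw [map_smul, map_smul, hg', hg])).resolve_right fun h => hx (smul_left_cancel g h)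
    simp [hx, hgx, this]

lemma smul_eq_of_card_fixedBy_add_two [Finite K]
    (hcard : Nat.card (MulAction.fixedBy K g) + 2 = Nat.card K) (hb : g • b ≠ b) (hcb : c ≠ b)
    (hcgb : c ≠ g • b) : g • c = c := by
  by_contra hc
  have hgbc : g • b ∈ (MulAction.fixedBy K g)ᶜ := fun h => hb (smul_left_cancel g h)
  have hsub : ({c, b, g • b} : Set K) ⊆ (MulAction.fixedBy K g)ᶜ := by
    rintro d (rfl | rfl | rfl)
    exacts [hc, hb, hgbc]
  have hle := Set.ncard_le_ncard hsub
  have hthree : ({c, b, g • b} : Set K).ncard = 3 :=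
    Set.ncard_eq_three.2 ⟨_, _, _, hcb, hcgb, hb.symm, rfl⟩
  have hsum := Set.ncard_add_ncard_compl (MulAction.fixedBy K g)
  rw [Nat.card_coe_set_eq] at hcard
  omega

lemma exists_symmDiff_smul_eq [Finite K]
    (hcard : Nat.card (MulAction.fixedBy K g) + 2 = Nat.card K) (hg : g * g = 1)
    (hS : g • S ≠ S) : ∃ b c : K, b ≠ c ∧ S ∆ (g • S) = {b} ∆ {c} := by
  have hgg (d : K) : g • g • d = d := by rw [smul_smul, hg, one_smul]
  have hmem (d : K) : d ∈ g • S ↔ g • d ∈ S := by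
    rw [Set.mem_smul_set_iff_inv_smul_mem, inv_eq_of_mul_eq_one_left hg]
  obtain ⟨b, hb, hgb⟩ : ∃ b ∈ S, g • b ∉ S := by
    by_contra! hcon
    exact hS (Set.ext fun d => (hmem d).trans ⟨fun hd => hgg d ▸ hcon _ hd, hcon d⟩)
  have hne : g • b ≠ b := fun h => hgb (h.symm ▸ hb)
  refine ⟨b, g • b, hne.symm, Set.ext fun d => ?_⟩
  rw [Set.mem_symmDiff, Set.mem_symmDiff, hmem, Set.mem_singleton_iff, Set.mem_singleton_iff]
  rcases eq_or_ne d b with rfl | hdb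
  · simp [hb, hgb, hne.symm]
  rcases eq_or_ne d (g • b) with rfl | hdgb
  · simp [hb, hgb, hgg, hne]
  · simp [smul_eq_of_card_fixedBy_add_two hcard hne hdb hdgb, hdb, hdgb]

namespace IsStringCGroup

lemma pair_mem [FaithfulSMul G Ω] [MulAction.IsPreprimitive G K] (h : IsStringCGroup σ r)
    {𝒱 : Set (Set K)} (hempty : ∅ ∈ 𝒱) (hsymm : ∀ S ∈ 𝒱, ∀ T ∈ 𝒱, S ∆ T ∈ 𝒱)
    (hsmul : ∀ i < r, ∀ S ∈ 𝒱, σ i • S ∈ 𝒱) (hbc : b ≠ c) (hmem : {b} ∆ {c} ∈ 𝒱) (d e : K) :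
    {d} ∆ {e} ∈ 𝒱 := by
  let s : Setoid K :=
    { r := fun d e => {d} ∆ {e} ∈ 𝒱
      iseqv :=
        { refl := fun d => by rwa [symmDiff_self]
          symm := fun hde => by rwa [symmDiff_comm]
          trans := fun {d e f} hde hef => by
            have := hsymm _ hde _ hef
            rwa [symmDiff_assoc, symmDiff_symmDiff_cancel_left] at this } }
  have hs : s = ⊤ := by
    refine (h.setoid_eq_bot_or_eq_top (s := s) fun i hi d e hde => ?_).resolve_left fun hbot => ?_
    · have := hsmul i hi _ hde
      rwa [Set.smul_set_symmDiff, Set.smul_set_singleton, Set.smul_set_singleton] at this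
    · have : s b c := hmem
      exact hbc (by rwa [hbot] at this)
  exact (hs ▸ trivial : s d e)

lemma exists_smul_ne_set [MulAction.IsPretransitive G K] (h : IsStringCGroup σ r)
    (hS : S ≠ ∅) (hS' : S ≠ Set.univ) : ∃ i < r, σ i • S ≠ S := by
  by_contra! hcon
  have htop : MulAction.stabilizer G S = ⊤ := top_unique <|
    h.parabolic_range ▸ parabolic_le_iff.2 fun i hi => hcon i (Finset.mem_range.1 hi)
  exact (eq_empty_or_univ_of_smul_eq fun g => (htop ▸ Subgroup.mem_top g :
    g ∈ MulAction.stabilizer G S)).elim hS hS'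

lemma exists_symmDiff_smul_eq [Finite K] [MulAction.IsPretransitive G K] (h : IsStringCGroup σ r)
    (hcard : ∀ i < r, ∀ b : K, σ i • b ≠ b →
      Nat.card (MulAction.fixedBy K (σ i)) + 2 = Nat.card K) (hS : S ≠ ∅) (hS' : S ≠ Set.univ) :
    ∃ i < r, ∃ b c : K, b ≠ c ∧ S ∆ (σ i • S) = {b} ∆ {c} := by
  obtain ⟨i, hi, hne⟩ := h.exists_smul_ne_set hS hS'
  obtain ⟨b, hb⟩ : ∃ b : K, σ i • b ≠ b := by
    by_contra! hfix
    exact hne (smul_set_eq_of_forall_smul_eq hfix S)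
  exact ⟨i, hi, StringCGroup.exists_symmDiff_smul_eq (hcard i hi b hb) (h.mul_self i hi) hne⟩

lemma injOn (h : IsStringCGroup σ r) : Set.InjOn σ (range r) := fun i hi j hj hij => by
  by_contra hne
  exact h.notMem_parabolic (J := {j}) (Finset.mem_range.1 hi) (by simpa using hj)
    (by simpa using hne) (hij ▸ mem_parabolic (Finset.mem_singleton_self j))

/-- The supports of the elements of the parabolic subgroup omitting `v` that fix every block are
closed under symmetric difference; starting from those of `σ u` and `σ z` they give all sets of
blocks, so `σ v` is redundant. -/
lemma false_of_blockSupp_eq_univ [Finite K] [FaithfulSMul G Ω] [MulAction.IsPreprimitive G K]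
    (h : IsStringCGroup σ r) (hβ : ∀ b, Nat.card (fiber β b) = 2) (hK : Odd (Nat.card K))
    (hz : z < r) (hu : u < r) (hv : v < r) (huz : u ≠ z) (hvz : v ≠ z) (hvu : v ≠ u)
    (hzK : ∀ b : K, σ z • b = b) (huK : ∀ b : K, σ u • b = b) (hvK : ∀ b : K, σ v • b = b)
    (hsupp : blockSupp β (σ z) = Set.univ)
    (hcard : ∀ i < r, ∀ b : K, σ i • b ≠ b →
      Nat.card (MulAction.fixedBy K (σ i)) + 2 = Nat.card K) : False := by
  let W := parabolic σ ((range r).erase v)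
  have hmemW {i : ℕ} (hi : i < r) (hiv : i ≠ v) : σ i ∈ W :=
    mem_parabolic (Finset.mem_erase.2 ⟨hiv, Finset.mem_range.2 hi⟩)
  let 𝒱 : Set (Set K) := {S | ∃ w ∈ W, (∀ b : K, w • b = b) ∧ blockSupp β w = S}
  have huniv : Set.univ ∈ 𝒱 := ⟨σ z, hmemW hz hvz.symm, hzK, hsupp⟩
  have hsymm : ∀ S ∈ 𝒱, ∀ T ∈ 𝒱, S ∆ T ∈ 𝒱 := by
    rintro _ ⟨w, hw, hwK, rfl⟩ _ ⟨w', hw', hwK', rfl⟩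
    exact ⟨w * w', W.mul_mem hw hw', fun b => by rw [mul_smul, hwK', hwK],
      blockSupp_mul hβ hwK hwK'⟩
  have hsmul : ∀ i < r, ∀ S ∈ 𝒱, σ i • S ∈ 𝒱 := by
    rintro i hi _ ⟨w, hw, hwK, rfl⟩
    rcases eq_or_ne i v with rfl | hiv
    · exact (smul_set_eq_of_forall_smul_eq hvK _).symm ▸ ⟨w, hw, hwK, rfl⟩
    · exact ⟨σ i * w * (σ i)⁻¹, W.mul_mem (W.mul_mem (hmemW hi hiv) hw) (W.inv_mem (hmemW hi hiv)),
        fun b => by rw [mul_smul, mul_smul, hwK, smul_inv_smul], (smul_blockSupp _ _).symm⟩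
  have huempty : blockSupp β (σ u) ≠ ∅ := fun hemp => h.ne_one u hu (blockSupp_eq_empty.1 hemp)
  have huuniv : blockSupp β (σ u) ≠ Set.univ := fun heq =>
    huz (h.injOn (by simpa using hu) (by simpa using hz)
      (eq_of_blockSupp_eq hβ huK hzK (heq.trans hsupp.symm)))
  obtain ⟨i, hi, b, c, hbc, hpair⟩ := h.exists_symmDiff_smul_eq hcard huempty huuniv
  have hu𝒱 : blockSupp β (σ u) ∈ 𝒱 := ⟨σ u, hmemW hu hvu.symm, huK, rfl⟩
  obtain ⟨w, hw, hwK, hwv⟩ := mem_of_forall_pair_mem hK hsymm huniv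
    (h.pair_mem (Ω := Ω) (by simpa using hsymm _ huniv _ huniv) hsymm hsmul hbc
      (hpair ▸ hsymm _ hu𝒱 _ (hsmul i hi _ hu𝒱))) (blockSupp β (σ v))
  exact h.notMem_parabolic hv (Finset.erase_subset _ _) (Finset.notMem_erase v _)
    (eq_of_blockSupp_eq hβ hwK hvK hwv ▸ hw)

lemma card_fixedBy_of_five_blocks_of_size_two [Finite G] [Finite Ω] [Finite K] [FaithfulSMul G Ω]
    [MulAction.IsPreprimitive G K] (h : IsStringCGroup σ r)
    (hβ : ∀ b, Nat.card (fiber β b) = 2) (hK : Nat.card K = 5) (hr : 7 ≤ r) (hj : j < r)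
    (hb : σ j • b ≠ b) : r = 7 ∧ Nat.card (MulAction.fixedBy K (σ j)) = 3 ∧
      (2 ≤ j ∧ j ≤ 5 ∧ (∀ c : K, σ 0 • c = c) ∧ blockSupp β (σ 0) = Set.univ ∨
        1 ≤ j ∧ j ≤ 4 ∧ (∀ c : K, σ 6 • c = c) ∧ blockSupp β (σ 6) = Set.univ) := by
  have : Nonempty K := ⟨b⟩
  obtain ⟨a, ha, e, he, her, _, hlen, hfix, -⟩ :=
    h.exists_interval_of_three_le hβ (by omega) le_rfl (by omega) (by omega) hj hb
  have houter : (outer a e r).card ≤ 1 := (Nat.pow_le_pow_iff_right one_lt_two).1 <|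
    h.two_pow_card_le_factorial_of_smul_eq hβ (Icc_subset_range her) outer_subset_range
      isApart_outer_Icc hfix
  have hcount := le_card_outer_add (r := r) (ha.trans he)
  have hfixed := card_fixedBy_add_two_le hb
  obtain rfl : r = 7 := by omega
  obtain rfl : e = a + 3 := by omega
  have hsupp (z : ℕ) (hz : z ∈ outer a (a + 3) 7) : blockSupp β (σ z) = Set.univ :=
    blockSupp_eq_univ (h.le_centralizer_of_isApart outer_subset_range (Icc_subset_range her)
      isApart_outer_Icc (mem_parabolic hz)) (h.ne_one z (mem_outer.1 hz).1)
  refine ⟨rfl, by omega, ?_⟩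
  have ha3 : a ≤ 3 := by omega
  interval_cases a
  · exact absurd houter (by decide)
  · exact Or.inr ⟨ha, he, hfix 6 (by decide), hsupp 6 (by decide)⟩
  · exact Or.inl ⟨ha, he, hfix 0 (by decide), hsupp 0 (by decide)⟩
  · exact absurd houter (by decide)

lemma false_of_five_blocks_of_size_two [Finite G] [Finite Ω] [Finite K] [FaithfulSMul G Ω]
    [MulAction.IsPreprimitive G K] (h : IsStringCGroup σ r)
    (hβ : ∀ b, Nat.card (fiber β b) = 2) (hK : Nat.card K = 5) (hr : 7 ≤ r) : False := by
  have : Nontrivial K := Finite.one_lt_card_iff_nontrivial.1 (by omega)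
  have hodd : Odd (Nat.card K) := hK ▸ by decide
  have hcases {i : ℕ} (hi : i < r) {b : K} (hb : σ i • b ≠ b) :=
    h.card_fixedBy_of_five_blocks_of_size_two hβ hK hr hi hb
  have hcard : ∀ i < r, ∀ b : K, σ i • b ≠ b →
      Nat.card (MulAction.fixedBy K (σ i)) + 2 = Nat.card K := fun i hi b hb => by
    rw [hK, (hcases hi hb).2.1]
  obtain ⟨j, hj, b, hb⟩ := h.exists_smul_ne (K := K)
  obtain ⟨rfl, -, hends⟩ := hcases hj hb
  have hnot_both (h0 : ∀ c : K, σ 0 • c = c) (h0' : blockSupp β (σ 0) = Set.univ)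
      (h6 : ∀ c : K, σ 6 • c = c) (h6' : blockSupp β (σ 6) = Set.univ) : False :=
    absurd (h.injOn (by simp) (by simp) (eq_of_blockSupp_eq hβ h0 h6 (h0'.trans h6'.symm)))
      (by decide)
  rcases hends with ⟨-, -, h0, h0'⟩ | ⟨-, -, h6, h6'⟩
  · have hfix {i : ℕ} (hi : i < 7) (hi' : i < 2 ∨ 5 < i) (c : K) : σ i • c = c := by
      by_contra hc
      rcases (hcases hi hc).2.2 with hlo | ⟨-, -, h6, h6'⟩
      exacts [by omega, hnot_both h0 h0' h6 h6']
    exact h.false_of_blockSupp_eq_univ hβ hodd (z := 0) (u := 1) (v := 6) (by decide) (by decide)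
      (by decide) (by decide) (by decide) (by decide) h0 (hfix (by decide) (by decide))
      (hfix (by decide) (by decide)) h0' hcard
  · have hfix {i : ℕ} (hi : i < 7) (hi' : i < 1 ∨ 4 < i) (c : K) : σ i • c = c := by
      by_contra hc
      rcases (hcases hi hc).2.2 with ⟨-, -, h0, h0'⟩ | hhi
      exacts [hnot_both h0 h0' h6 h6', by omega]
    exact h.false_of_blockSupp_eq_univ hβ hodd (z := 6) (u := 5) (v := 0) (by decide) (by decide)
      (by decide) (by decide) (by decide) (by decide) h6 (hfix (by decide) (by decide))
      (hfix (by decide) (by decide)) h6' hcard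

end IsStringCGroup

end FiveBlocksOfSizeTwo

section CommutingSubgroups

variable {G : Type*} [Group G] {H L : Subgroup G}

lemma exists_mul_eq_of_mem_sup (hHL : H ≤ Subgroup.centralizer L) {g : G} (hg : g ∈ H ⊔ L) :
    ∃ x ∈ H, ∃ y ∈ L, x * y = g := by
  have hcomm : ∀ (x : H) (y : L), Commute (H.subtype x) (L.subtype y) := fun x y =>
    (hHL x.2 y y.2).symm
  rw [← H.range_subtype, ← L.range_subtype, ← MonoidHom.noncommCoprod_range _ _ hcomm] at hg
  obtain ⟨⟨x, y⟩, rfl⟩ := hg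
  exact ⟨x, x.2, y, y.2, rfl⟩

lemma card_mul_card_le_card_sup [Finite G] (hHL : Disjoint H L) :
    Nat.card H * Nat.card L ≤ Nat.card (H ⊔ L : Subgroup G) := by
  rw [← Nat.card_prod]
  exact Nat.card_le_card_of_injective
    (fun p : H × L => (⟨p.1 * p.2, Subgroup.mul_mem_sup p.1.2 p.2.2⟩ : (H ⊔ L : Subgroup G)))
    fun p q hpq => Subgroup.mul_injective_of_disjoint hHL (congrArg Subtype.val hpq)

lemma sup_le_centralizer_sup (hH : H ≤ Subgroup.centralizer H) (hL : L ≤ Subgroup.centralizer L)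
    (hHL : H ≤ Subgroup.centralizer L) :
    H ⊔ L ≤ Subgroup.centralizer (H ⊔ L : Subgroup G) :=
  sup_le
    (Subgroup.le_centralizer_iff.1 (sup_le hH (Subgroup.le_centralizer_iff.1 hHL)))
    (Subgroup.le_centralizer_iff.1 (sup_le hHL hL))

lemma commute_of_mul_sq_eq_one {s t : G} (hs : s * s = 1) (ht : t * t = 1)
    (hst : (s * t) ^ 2 = 1) : Commute s t := by
  have hinv : (s * t)⁻¹ = s * t := inv_eq_of_mul_eq_one_left ((pow_two _).symm.trans hst)
  rw [mul_inv_rev, inv_eq_of_mul_eq_one_left hs, inv_eq_of_mul_eq_one_left ht] at hinv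
  exact hinv.symm

lemma three_le_orderOf_mul [Finite G] {s t : G} (hs : s * s = 1) (ht : t * t = 1)
    (hst : ¬ Commute s t) : 3 ≤ orderOf (s * t) := by
  by_contra! hlt
  refine hst (commute_of_mul_sq_eq_one hs ht (orderOf_dvd_iff_pow_eq_one.1 ?_))
  have hpos := orderOf_pos (s * t)
  interval_cases orderOf (s * t) <;> decide

end CommutingSubgroups

section TwoBlocks

variable {G Ω K : Type*} [Group G] [MulAction G Ω] [MulAction G K] {σ : ℕ → G}
  {r ℓ c d i j : ℕ} {S T : Finset ℕ} {β : Ω →[G] K}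

lemma IsApart.disjoint (hST : IsApart S T) : Disjoint S T :=
  Finset.disjoint_left.2 fun i hi hi' => by
    have := hST i hi i hi'
    omega

lemma zpowers_mul_le_parabolic : Subgroup.zpowers (σ i * σ j) ≤ parabolic σ {i, j} :=
  Subgroup.zpowers_le.2 (mul_mem (mem_parabolic (by simp)) (mem_parabolic (by simp)))

lemma isPretransitive_of_smul_ne (hK : Nat.card K = 2) {P : Subgroup G} {g : G} (hg : g ∈ P)
    {b : K} (hb : g • b ≠ b) : MulAction.IsPretransitive P K := by
  refine (MulAction.isPretransitive_iff_base b).2 fun c => ?_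
  rcases eq_or_ne b c with rfl | hc
  · exact ⟨1, one_smul _ _⟩
  · exact ⟨⟨g, hg⟩, ((Nat.card_eq_two_iff' b).1 hK).unique hb hc.symm⟩

lemma card_cube_le_eight_mul_three_pow [Finite Ω] [FaithfulSMul G Ω]
    (hβ : ∀ b, Nat.card (fiber β b) = ℓ) (hK : Nat.card K = 2) {A : Subgroup G}
    (hA : A ≤ Subgroup.centralizer A) {g : G} (hg : g ∈ A) {b : K} (hb : g • b ≠ b) :
    Nat.card A ^ 3 ≤ 8 * 3 ^ ℓ := by
  have := isPretransitive_of_smul_ne hK hg hb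
  have : Finite K := Nat.finite_of_card_ne_zero (by omega)
  have hindex := card_le_mul_card_inf_stabilizer A b
  have hcube := card_cube_le_three_pow_card_fiber (β := β) (b := b) (P := A)
    (inf_le_left.trans hA) inf_le_right
    (inf_le_left.trans (hA.trans (Subgroup.centralizer_le inf_le_left)))
  rw [hK] at hindex
  rw [hβ] at hcube
  calc Nat.card A ^ 3 ≤ (2 * _) ^ 3 := Nat.pow_le_pow_left hindex 3
    _ = 8 * _ := mul_pow 2 _ 3
    _ ≤ 8 * 3 ^ ℓ := Nat.mul_le_mul_left 8 hcube

namespace IsStringCGroup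

lemma card_le_half_add_one [Finite G] [Finite Ω] [FaithfulSMul G Ω] (h : IsStringCGroup σ r)
    (hβ : ∀ b, Nat.card (fiber β b) = ℓ) (hK : Nat.card K = 2) (hT : T ⊆ range r)
    (hcomm : ∀ i ∈ T, ∀ k ∈ T, Commute (σ i) (σ k)) (hj : j ∈ T) {b : K} (hb : σ j • b ≠ b) :
    T.card ≤ ℓ / 2 + 1 := by
  have := isPretransitive_of_smul_ne hK (mem_parabolic hj) hb
  have : Finite K := Nat.finite_of_card_ne_zero (by omega)
  have hindex := card_le_mul_card_inf_stabilizer (parabolic σ T) b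
  have hhalf := card_le_two_pow_half_card_fiber (β := β) (b := b) (P := parabolic σ T)
    (inf_le_left.trans (parabolic_le_centralizer hcomm)) inf_le_right
    fun a ha => mul_self_eq_one_of_mem_parabolic
      (fun i hi => h.mul_self i (Finset.mem_range.1 (hT hi))) hcomm ha.1
  rw [hK] at hindex
  rw [hβ] at hhalf
  refine (Nat.pow_le_pow_iff_right one_lt_two).1 ((h.two_pow_card_le hT).trans ?_)
  rw [pow_succ']
  exact hindex.trans (Nat.mul_le_mul_left 2 hhalf)

lemma rank_cases_of_smul_ne [Finite G] [Finite Ω] [FaithfulSMul G Ω] (h : IsStringCGroup σ r)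
    (hβ : ∀ b, Nat.card (fiber β b) = ℓ) (hK : Nat.card K = 2) (hℓ : 5 ≤ ℓ) (hr : 2 * ℓ ≤ r + 3)
    (hj : j < r) {b : K} (hb : σ j • b ≠ b) :
    (ℓ = 5 ∧ r = 7 ∨ ℓ = 6 ∧ r = 9) ∧ j % 2 = 1 := by
  obtain ⟨T₁, hT₁, hcard₁, hsparse₁⟩ := exists_isSparse_subset (range (j - 1))
  obtain ⟨T₂, hT₂, hcard₂, hsparse₂⟩ := exists_isSparse_subset (Finset.Ico (j + 2) r)
  have hlt : ∀ i ∈ T₁, i + 1 < j := fun i hi => by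
    have := Finset.mem_range.1 (hT₁ hi)
    omega
  have hgt : ∀ i ∈ T₂, j + 1 < i ∧ i < r := fun i hi => Finset.mem_Ico.1 (hT₂ hi)
  have hdisj : Disjoint T₁ T₂ := Finset.disjoint_left.2 fun i h₁ h₂ => by
    have := hlt i h₁
    have := hgt i h₂
    omega
  have hjT : j ∉ T₁ ∪ T₂ := fun hmem => by
    rcases Finset.mem_union.1 hmem with h₁ | h₂
    · have := hlt j h₁
      omega
    · have := hgt j h₂
      omega
  have hTr : insert j (T₁ ∪ T₂) ⊆ range r := fun i hi => by
    rw [Finset.mem_insert, Finset.mem_union] at hi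
    rw [Finset.mem_range]
    have := hlt i
    have := hgt i
    grind
  have hsparse : IsSparse (insert j (T₁ ∪ T₂)) := by
    intro i hi k hk
    grind
  have hcard := h.card_le_half_add_one hβ hK hTr (h.commute_of_isSparse hTr hsparse)
    (Finset.mem_insert_self j _) hb
  rw [Finset.card_insert_of_notMem hjT, Finset.card_union_of_disjoint hdisj] at hcard
  rw [Finset.card_range] at hcard₁
  rw [Nat.card_Ico] at hcard₂
  omega

lemma not_commute_succ [Finite G] [Finite Ω] [FaithfulSMul G Ω] (h : IsStringCGroup σ r)
    (hβ : ∀ b, Nat.card (fiber β b) = ℓ) (hK : Nat.card K = 2) (hT : T ⊆ range r) (hj : j ∈ T)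
    {b : K} (hb : σ j • b ≠ b)
    (hgap : ∀ i ∈ T, ∀ k ∈ T, i < k → i + 1 < k ∨ i = c ∧ k = c + 1)
    (hcard : ℓ / 2 + 1 < T.card) : ¬ Commute (σ c) (σ (c + 1)) := fun hc => by
  have hlt : ∀ i ∈ T, ∀ k ∈ T, i < k → Commute (σ i) (σ k) := fun i hi k hk hik => by
    rcases hgap i hi k hk hik with hik | ⟨rfl, rfl⟩
    · exact h.commute i k hik (Finset.mem_range.1 (hT hk))
    · exact hc
  refine hcard.not_ge (h.card_le_half_add_one hβ hK hT (fun i hi k hk => ?_) hj hb)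
  rcases lt_trichotomy i k with hik | rfl | hik
  · exact hlt i hi k hk hik
  · exact Commute.refl _
  · exact (hlt k hk i hi hik).symm

lemma exists_commutative_nine_mul_two_pow_le [Finite G] (h : IsStringCGroup σ r)
    (hcd : c + 2 < d) (hd : d + 1 < r) (hT : T ⊆ range r) (hsparse : IsSparse T)
    (hcdT : IsApart {c, c + 1, d, d + 1} T) (hc : ¬ Commute (σ c) (σ (c + 1)))
    (hdd : ¬ Commute (σ d) (σ (d + 1))) :
    ∃ A : Subgroup G, A ≤ Subgroup.centralizer A ∧ parabolic σ T ≤ A ∧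
      9 * 2 ^ T.card ≤ Nat.card A := by
  have hCr : {c, c + 1} ⊆ range r := by grind
  have hDr : {d, d + 1} ⊆ range r := by grind
  have hCT : IsApart {c, c + 1} T := fun i hi => hcdT i (by grind)
  have hDT : IsApart {d, d + 1} T := fun i hi => hcdT i (by grind)
  have hCD : IsApart {c, c + 1} {d, d + 1} := fun i hi j hj => by grind
  have hCDT : IsApart {c, c + 1} ({d, d + 1} ∪ T) := fun i hi j hj =>
    (Finset.mem_union.1 hj).elim (hCD i hi j) (hCT i hi j)
  have hx := zpowers_mul_le_parabolic (σ := σ) (i := c) (j := c + 1)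
  have hy := zpowers_mul_le_parabolic (σ := σ) (i := d) (j := d + 1)
  have hyT : Subgroup.zpowers (σ d * σ (d + 1)) ⊔ parabolic σ T ≤
      parabolic σ ({d, d + 1} ∪ T) :=
    sup_le (hy.trans (parabolic_mono Finset.subset_union_left))
      (parabolic_mono Finset.subset_union_right)
  refine ⟨Subgroup.zpowers (σ c * σ (c + 1)) ⊔
    (Subgroup.zpowers (σ d * σ (d + 1)) ⊔ parabolic σ T), ?_, ?_, ?_⟩
  · exact sup_le_centralizer_sup (Subgroup.le_centralizer _)
      (sup_le_centralizer_sup (Subgroup.le_centralizer _)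
        (parabolic_le_centralizer (h.commute_of_isSparse hT hsparse))
        (hy.trans (h.le_centralizer_of_isApart hDr hT hDT)))
      ((hx.trans (h.le_centralizer_of_isApart hCr (Finset.union_subset hDr hT) hCDT)).trans
        (Subgroup.centralizer_le hyT))
  · exact le_sup_right.trans le_sup_right
  · have hxcard := three_le_orderOf_mul (h.mul_self c (by omega)) (h.mul_self (c + 1) (by omega)) hc
    have hycard := three_le_orderOf_mul (h.mul_self d (by omega)) (h.mul_self (d + 1) hd) hdd
    rw [← Nat.card_zpowers] at hxcard hycard
    calc 9 * 2 ^ T.card = 3 * (3 * 2 ^ T.card) := by ring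
      _ ≤ _ * (_ * _) := Nat.mul_le_mul hxcard (Nat.mul_le_mul hycard (h.two_pow_card_le hT))
      _ ≤ _ * _ := Nat.mul_le_mul_left _ (card_mul_card_le_card_sup
        ((h.disjoint_parabolic hDr hT hDT.disjoint).mono_left hy))
      _ ≤ _ := card_mul_card_le_card_sup ((h.disjoint_parabolic hCr
        (Finset.union_subset hDr hT) hCDT.disjoint).mono hx hyT)

lemma eq_one_or_add_two_eq_of_smul_ne [Finite G] [Finite Ω] [FaithfulSMul G Ω]
    (h : IsStringCGroup σ r) (hβ : ∀ b, Nat.card (fiber β b) = ℓ) (hK : Nat.card K = 2)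
    (hℓr : ℓ = 5 ∧ r = 7 ∨ ℓ = 6 ∧ r = 9) (hj : j < r) (hodd : j % 2 = 1) {b : K}
    (hb : σ j • b ≠ b) : j = 1 ∨ j + 2 = r := by
  by_contra! hmid
  have hfirst : ¬ Commute (σ 0) (σ (0 + 1)) :=
    h.not_commute_succ hβ hK (T := insert 0 ((range r).filter (· % 2 = 1))) (j := j)
      (by grind) (by grind) hb (by grind) (by rcases hℓr with ⟨rfl, rfl⟩ | ⟨rfl, rfl⟩ <;> decide)
  have hlast : ¬ Commute (σ (r - 2)) (σ (r - 2 + 1)) :=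
    h.not_commute_succ hβ hK
      (T := {0, r - 1} ∪ (range r).filter fun i => i % 2 = 1 ∧ i ≠ 1) (j := j)
      (by grind) (by grind) hb (by grind) (by rcases hℓr with ⟨rfl, rfl⟩ | ⟨rfl, rfl⟩ <;> decide)
  obtain ⟨A, hA, hTA, hcard⟩ := h.exists_commutative_nine_mul_two_pow_le
    (T := (range (r - 2)).filter fun i => i % 2 = 1 ∧ i ≠ 1) (by omega) (by omega) (by grind)
    (fun i hi j hj => by grind) (fun i hi j hj => by grind) hfirst hlast
  have hcube := (Nat.pow_le_pow_left hcard 3).trans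
    (card_cube_le_eight_mul_three_pow hβ hK hA (hTA (mem_parabolic (by grind))) hb)
  revert hcube
  rcases hℓr with ⟨rfl, rfl⟩ | ⟨rfl, rfl⟩ <;> decide

end IsStringCGroup

end TwoBlocks

section FullSets

variable {G Ω K : Type*} [Group G] [MulAction G Ω] [MulAction G K] {σ : ℕ → G}
  {r ℓ j z w q : ℕ} {S S' : Finset ℕ} {β : Ω →[G] K}

variable (K σ r ℓ j z S) in
/-- `S` indexes `ℓ / 2` pairwise commuting generators that fix all blocks and commute with `σ j` and
`σ z`. If `σ j` moves a block, then these generate on each block a maximal elementary abelian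
2-group. -/
structure IsFull : Prop where
  subset_range : S ⊆ range r
  isSparse : IsSparse S
  isApart : IsApart S {j, z}
  smul_eq : ∀ i ∈ S, ∀ b : K, σ i • b = b
  card_eq : S.card = ℓ / 2

lemma IsSparse.insert (hS : IsSparse S) (hSz : IsApart S {z}) : IsSparse (insert z S) := by
  intro i hi k hk hik
  rcases Finset.mem_insert.1 hi with rfl | hiS <;> rcases Finset.mem_insert.1 hk with rfl | hkS
  · exact absurd rfl hik
  · exact (hSz k hkS i (Finset.mem_singleton_self i)).symm
  · exact hSz i hiS k (Finset.mem_singleton_self k)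
  · exact hS i hiS k hkS hik

namespace IsStringCGroup

lemma le_centralizer_of_isFull (h : IsStringCGroup σ r) (hj : j < r)
    (hS : IsFull K σ r ℓ j z S) :
    parabolic σ S ≤ Subgroup.centralizer (parabolic σ {j}) :=
  h.le_centralizer_of_isApart hS.subset_range (by simpa using hj)
    fun i hi k hk => hS.isApart i hi k (by grind)

lemma exists_smul_eq_on_fiber_of_isFull [Finite G] [Finite Ω] [FaithfulSMul G Ω]
    [MulAction.IsPretransitive (parabolic σ {j}) K] (h : IsStringCGroup σ r)
    (hβ : ∀ b, Nat.card (fiber β b) = ℓ) (hj : j < r) (hz : z < r)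
    (hzfix : ∀ b : K, σ z • b = b) (hS : IsFull K σ r ℓ j z S) (b : K) :
    ∃ e ∈ parabolic σ S, ∀ x, β x = b → σ z • x = e • x := by
  have hSz : IsApart S {z} := fun i hi k hk => hS.isApart i hi k (by grind)
  have hzS : z ∉ S := Finset.disjoint_singleton_right.1 hSz.disjoint
  have hsub : insert z S ⊆ range r :=
    Finset.insert_subset (Finset.mem_range.2 hz) hS.subset_range
  have hsparse : IsSparse (insert z S) := hS.isSparse.insert hSz
  have hcomm : parabolic σ {z} ≤ Subgroup.centralizer (parabolic σ S) :=
    parabolic_le_centralizer fun i hi k hk =>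
      h.commute_of_isSparse hsub hsparse i (by grind) k (by grind)
  have hcard := h.two_pow_card_le hsub
  rw [Finset.card_insert_of_notMem hzS, hS.card_eq] at hcard
  obtain ⟨a, ha, hane, hatriv⟩ := exists_ne_one_smul_eq_on_fiber (β := β) (b := b)
    (A := parabolic σ (insert z S))
    (parabolic_le_stabilizer (fun i hi => by have := hS.smul_eq i; grind) b)
    (fun a => h.mul_self_of_isSparse hsub hsparse)
    (by rw [hβ]; exact (Nat.pow_lt_pow_right one_lt_two (Nat.lt_succ_self _)).trans_le hcard)
  rw [Finset.insert_eq, parabolic_union] at ha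
  obtain ⟨y, hy, e, he, rfl⟩ := exists_mul_eq_of_mem_sup hcomm ha
  rcases h.eq_one_or_eq_of_mem_parabolic_singleton hz hy with rfl | rfl
  · refine absurd (eq_of_smul_eq_on_fiber (β := β) (b := b) (P := parabolic σ {j})
      (mul_mem (one_mem _) (h.le_centralizer_of_isFull hj hS he)) (one_mem _) fun x hx => ?_) hane
    rw [hatriv x hx, one_smul]
  · refine ⟨e, he, fun x hx => ?_⟩
    conv_lhs => rw [← hatriv x hx]
    rw [smul_smul, ← mul_assoc, h.mul_self z hz, one_mul]

lemma exists_mem_inter_smul_eq_on_fiber [Finite G] [Finite Ω] [FaithfulSMul G Ω]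
    [MulAction.IsPretransitive (parabolic σ {j}) K] (h : IsStringCGroup σ r)
    (hβ : ∀ b, Nat.card (fiber β b) = ℓ) (hj : j < r) (hz : z < r)
    (hzfix : ∀ b : K, σ z • b = b) (hS : IsFull K σ r ℓ j z S) (hS' : IsFull K σ r ℓ j z S')
    (b : K) : ∃ e ∈ parabolic σ (S ∩ S'), ∀ x, β x = b → σ z • x = e • x := by
  obtain ⟨e, he, hez⟩ := h.exists_smul_eq_on_fiber_of_isFull hβ hj hz hzfix hS b
  obtain ⟨e', he', hez'⟩ := h.exists_smul_eq_on_fiber_of_isFull hβ hj hz hzfix hS' b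
  obtain rfl : e = e' := eq_of_smul_eq_on_fiber (h.le_centralizer_of_isFull hj hS he)
    (h.le_centralizer_of_isFull hj hS' he') fun x hx => (hez x hx).symm.trans (hez' x hx)
  exact ⟨e, h.inf_le S hS.subset_range S' hS'.subset_range ⟨he, he'⟩, hez⟩

lemma not_disjoint_of_isFull [Finite G] [Finite Ω] [FaithfulSMul G Ω]
    [MulAction.IsPretransitive (parabolic σ {j}) K] (h : IsStringCGroup σ r)
    (hβ : ∀ b, Nat.card (fiber β b) = ℓ) (hj : j < r) (hz : z < r)
    (hzfix : ∀ b : K, σ z • b = b) (hS : IsFull K σ r ℓ j z S) (hS' : IsFull K σ r ℓ j z S') :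
    ¬ Disjoint S S' := fun hdisj => by
  refine h.ne_one z hz (eq_of_smul_eq_smul fun x : Ω => ?_)
  obtain ⟨e, he, hez⟩ := h.exists_mem_inter_smul_eq_on_fiber hβ hj hz hzfix hS hS' (β x)
  rw [Finset.disjoint_iff_inter_eq_empty.1 hdisj, parabolic_empty, Subgroup.mem_bot] at he
  rw [hez x rfl, he]

lemma inter_ne_singleton_of_isFull [Finite G] [Finite Ω] [FaithfulSMul G Ω]
    [MulAction.IsPretransitive (parabolic σ {j}) K] [MulAction.IsPretransitive (parabolic σ {w}) K]
    (h : IsStringCGroup σ r) (hβ : ∀ b, Nat.card (fiber β b) = ℓ) (hj : j < r) (hz : z < r)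
    (hzfix : ∀ b : K, σ z • b = b) (hw : w < r) (hzw : IsApart {z} {w})
    (hS : IsFull K σ r ℓ j z S) (hS' : IsFull K σ r ℓ j z S') : S ∩ S' ≠ {q} := fun hinter => by
  have hqS : q ∈ S := Finset.inter_subset_left (hinter ▸ Finset.mem_singleton_self q)
  have hq : q < r := Finset.mem_range.1 (hS.subset_range hqS)
  have hqz : q ≠ z := fun hqz => by
    have := hS.isApart q hqS z (by simp)
    omega
  refine hqz (h.injOn (Finset.mem_range.2 hq) (Finset.mem_range.2 hz)
    (eq_of_smul_eq_smul fun x : Ω => ?_))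
  obtain ⟨e, he, hez⟩ := h.exists_mem_inter_smul_eq_on_fiber hβ hj hz hzfix hS hS' (β x)
  rw [hinter] at he
  rcases h.eq_one_or_eq_of_mem_parabolic_singleton hq he with rfl | rfl
  · exact absurd (eq_of_smul_eq_on_fiber (P := parabolic σ {w})
      (h.le_centralizer_of_isApart (by simpa using hz) (by simpa using hw) hzw
        (mem_parabolic (Finset.mem_singleton_self z))) (one_mem _) hez) (h.ne_one z hz)
  · exact (hez x rfl).symm

lemma exists_smul_one_ne [Finite G] [Finite Ω] [FaithfulSMul G Ω] (h : IsStringCGroup σ r)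
    (hβ : ∀ b, Nat.card (fiber β b) = ℓ) (hK : Nat.card K = 2)
    (hℓr : ℓ = 5 ∧ r = 7 ∨ ℓ = 6 ∧ r = 9)
    (hfix : ∀ k < r, k ≠ 1 → k ≠ r - 2 → ∀ b : K, σ k • b = b) {b : K}
    (hb : σ (r - 2) • b ≠ b) : ∃ b : K, σ 1 • b ≠ b := by
  by_contra! h₁
  have := isPretransitive_of_smul_ne hK (mem_parabolic (Finset.mem_singleton_self (r - 2))) hb
  have hfix' : ∀ k < r - 3, ∀ b : K, σ k • b = b := fun k hk => by
    rcases eq_or_ne k 1 with rfl | hk₁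
    · exact h₁
    · exact hfix k (by omega) hk₁ (by omega)
  have hfull (t : ℕ) (hcard : ((range (r - 3)).filter (· % 2 = t)).card = ℓ / 2) :
      IsFull K σ r ℓ (r - 2) (r - 1) ((range (r - 3)).filter (· % 2 = t)) :=
    ⟨by grind, fun i hi k hk => by grind, fun i hi k hk => by grind,
      fun i hi => hfix' i (by grind), hcard⟩
  refine h.not_disjoint_of_isFull hβ (by omega) (by omega)
    (hfix (r - 1) (by omega) (by omega) (by omega)) (hfull 0 ?_) (hfull 1 ?_) ?_ <;>
  rcases hℓr with ⟨rfl, rfl⟩ | ⟨rfl, rfl⟩ <;> decide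

lemma exists_smul_sub_two_ne [Finite G] [Finite Ω] [FaithfulSMul G Ω] (h : IsStringCGroup σ r)
    (hβ : ∀ b, Nat.card (fiber β b) = ℓ) (hK : Nat.card K = 2)
    (hℓr : ℓ = 5 ∧ r = 7 ∨ ℓ = 6 ∧ r = 9)
    (hfix : ∀ k < r, k ≠ 1 → k ≠ r - 2 → ∀ b : K, σ k • b = b) {b : K} (hb : σ 1 • b ≠ b) :
    ∃ b : K, σ (r - 2) • b ≠ b := by
  by_contra! h₂
  have := isPretransitive_of_smul_ne hK (mem_parabolic (Finset.mem_singleton_self 1)) hb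
  have hfix' : ∀ k < r, 3 ≤ k → ∀ b : K, σ k • b = b := fun k hk hk₃ => by
    rcases eq_or_ne k (r - 2) with rfl | hk₂
    · exact h₂
    · exact hfix k hk (by omega) hk₂
  have hfull (t : ℕ) (hcard : ((Finset.Ico 3 r).filter (· % 2 = t)).card = ℓ / 2) :
      IsFull K σ r ℓ 1 0 ((Finset.Ico 3 r).filter (· % 2 = t)) :=
    ⟨by grind, fun i hi k hk => by grind, fun i hi k hk => by grind,
      fun i hi => hfix' i (by grind) (by grind), hcard⟩
  refine h.not_disjoint_of_isFull hβ (by omega) (by omega)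
    (hfix 0 (by omega) (by omega) (by omega)) (hfull 0 ?_) (hfull 1 ?_) ?_ <;>
  rcases hℓr with ⟨rfl, rfl⟩ | ⟨rfl, rfl⟩ <;> decide

lemma smul_sub_two_eq_of_smul_one_ne [Finite G] [Finite Ω] [FaithfulSMul G Ω]
    (h : IsStringCGroup σ r) (hβ : ∀ b, Nat.card (fiber β b) = ℓ) (hK : Nat.card K = 2)
    (hℓr : ℓ = 5 ∧ r = 7 ∨ ℓ = 6 ∧ r = 9)
    (hfix : ∀ k < r, k ≠ 1 → k ≠ r - 2 → ∀ b : K, σ k • b = b) {b : K} (hb : σ 1 • b ≠ b)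
    (c : K) : σ (r - 2) • c = c := by
  by_contra hc
  have := isPretransitive_of_smul_ne hK (mem_parabolic (Finset.mem_singleton_self 1)) hb
  have := isPretransitive_of_smul_ne hK (mem_parabolic (Finset.mem_singleton_self (r - 2))) hc
  have heven : IsFull K σ r ℓ (r - 2) (r - 1) ((range (r - 3)).filter (· % 2 = 0)) :=
    ⟨by grind, fun i hi k hk => by grind, fun i hi k hk => by grind,
      fun i hi => hfix i (by grind) (by grind) (by grind),
      by rcases hℓr with ⟨rfl, rfl⟩ | ⟨rfl, rfl⟩ <;> decide⟩
  have hodd : IsFull K σ r ℓ (r - 2) (r - 1)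
      (insert 0 ((range (r - 3)).filter fun i => i % 2 = 1 ∧ i ≠ 1)) :=
    ⟨by grind, fun i hi k hk => by grind, fun i hi k hk => by grind,
      fun i hi => hfix i (by grind) (by grind) (by grind),
      by rcases hℓr with ⟨rfl, rfl⟩ | ⟨rfl, rfl⟩ <;> decide⟩
  exact h.inter_ne_singleton_of_isFull hβ (w := 1) (q := 0) (by omega) (by omega)
    (hfix (r - 1) (by omega) (by omega) (by omega)) (by omega) (by grind) heven hodd
    (by rcases hℓr with ⟨rfl, rfl⟩ | ⟨rfl, rfl⟩ <;> decide)

lemma false_of_two_blocks [Finite G] [Finite Ω] [FaithfulSMul G Ω]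
    [MulAction.IsPretransitive G K] (h : IsStringCGroup σ r)
    (hβ : ∀ b, Nat.card (fiber β b) = ℓ) (hK : Nat.card K = 2) (hℓ : 5 ≤ ℓ) (hr : 2 * ℓ ≤ r + 3) :
    False := by
  have : Finite K := Nat.finite_of_card_ne_zero (by omega)
  have : Nontrivial K := Finite.one_lt_card_iff_nontrivial.1 (by omega)
  obtain ⟨i, hi, b, hb⟩ := h.exists_smul_ne (K := K)
  have hℓr := (h.rank_cases_of_smul_ne hβ hK hℓ hr hi hb).1
  have hfix : ∀ k < r, k ≠ 1 → k ≠ r - 2 → ∀ b : K, σ k • b = b := fun k hk h₁ h₂ b => by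
    by_contra hb
    have hodd := (h.rank_cases_of_smul_ne hβ hK hℓ hr hk hb).2
    have := h.eq_one_or_add_two_eq_of_smul_ne hβ hK hℓr hk hodd hb
    omega
  have hone : ∃ b : K, σ 1 • b ≠ b := by
    by_contra! h₁
    rcases eq_or_ne i (r - 2) with rfl | hi₂
    · exact (h.exists_smul_one_ne hβ hK hℓr hfix hb).elim fun c hc => hc (h₁ c)
    · rcases eq_or_ne i 1 with rfl | hi₁
      · exact hb (h₁ b)
      · exact hb (hfix i hi hi₁ hi₂ b)
  obtain ⟨c, hc⟩ := hone
  obtain ⟨d, hd⟩ := h.exists_smul_sub_two_ne hβ hK hℓr hfix hc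
  exact hd (h.smul_sub_two_eq_of_smul_one_ne hβ hK hℓr hfix hc d)

theorem add_three_lt_card_mul [Finite G] [Finite Ω] [Finite K] [FaithfulSMul G Ω]
    [MulAction.IsPreprimitive G K] (h : IsStringCGroup σ r)
    (hβ : ∀ b, Nat.card (fiber β b) = ℓ) (hk : 2 ≤ Nat.card K) (hℓ : 2 ≤ ℓ)
    (hkl : 9 ≤ Nat.card K * ℓ) : r + 3 < Nat.card K * ℓ := by
  by_contra! hr
  rcases hk.eq_or_lt' with hK | hk
  · rw [hK] at hkl hr
    exact h.false_of_two_blocks hβ hK (by omega) hr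
  · rcases h.card_eq_of_three_le hβ hk hℓ hkl hr with ⟨hK, rfl⟩ | ⟨hK, rfl⟩
    · exact h.false_of_three_blocks_of_size_three hβ hK (by omega)
    · exact h.false_of_five_blocks_of_size_two hβ hK (by omega)

end IsStringCGroup

end FullSets

section Cosets

variable {G : Type*} [Group G] {S M : Subgroup G}

/-- The equivariant map `g S ↦ g M` from the points to the blocks of a coset action. -/
def cosetMap (h : S ≤ M) : (G ⧸ S) →[G] G ⧸ M where
  toFun := Subgroup.quotientMapOfLE h
  map_smul' _ x := QuotientGroup.induction_on x fun _ => rfl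

lemma card_fiber_eq_card_fiber {Ω K : Type*} [MulAction G Ω] [MulAction G K]
    [MulAction.IsPretransitive G K] (β : Ω →[G] K) (b c : K) :
    Nat.card (fiber β b) = Nat.card (fiber β c) := by
  obtain ⟨g, rfl⟩ := MulAction.exists_smul_eq G b c
  exact Nat.card_congr <| (MulAction.toPerm g).subtypeEquiv fun x => by
    rw [mem_fiber, mem_fiber, MulAction.toPerm_apply, map_smul, smul_left_cancel_iff]

lemma card_eq_card_mul_card_fiber {Ω K : Type*} [MulAction G Ω] [MulAction G K] [Finite Ω]
    [Finite K] [MulAction.IsPretransitive G K] (β : Ω →[G] K) (b : K) :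
    Nat.card Ω = Nat.card K * Nat.card (fiber β b) := by
  have := Fintype.ofFinite K
  rw [Nat.card_congr (Equiv.sigmaFiberEquiv β).symm, Nat.card_sigma,
    Nat.card_eq_fintype_card, ← smul_eq_mul, ← Finset.card_univ]
  exact Finset.sum_eq_card_nsmul fun c _ => card_fiber_eq_card_fiber β c b

lemma faithfulSMul_quotient (hS : S.normalCore = ⊥) : FaithfulSMul G (G ⧸ S) := by
  rw [Subgroup.normalCore_eq_ker, MonoidHom.ker_eq_bot_iff] at hS
  exact ⟨fun {g g'} h => hS (Equiv.Perm.ext h)⟩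

lemma isPreprimitive_quotient (hM : IsCoatom M) : MulAction.IsPreprimitive G (G ⧸ M) := by
  have : Nontrivial (G ⧸ M) := QuotientGroup.nontrivial_iff.2 hM.1
  rwa [← MulAction.isCoatom_stabilizer_iff_preprimitive G ((1 : G) : G ⧸ M),
    MulAction.stabilizer_quotient]

theorem IsStringCGroup.add_three_lt_index [Finite G] {σ : ℕ → G} {r : ℕ}
    (h : IsStringCGroup σ r) (hS : S.normalCore = ⊥) (hSM : S < M) (hM : M ≠ ⊤)
    (h4 : S.index ≠ 4) (h6 : S.index ≠ 6) (h8 : S.index ≠ 8) : r + 3 < S.index := by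
  obtain ⟨P, hP, hMP⟩ := (eq_top_or_exists_le_coatom M).resolve_left hM
  have hSP : S < P := hSM.trans_le hMP
  have := faithfulSMul_quotient hS
  have := isPreprimitive_quotient hP
  have hindex : S.index = P.index * Nat.card (fiber (cosetMap hSP.le) ((1 : G) : G ⧸ P)) :=
    card_eq_card_mul_card_fiber _ _
  have hlt : P.index < S.index := Subgroup.index_strictAnti hSP
  have hk : 2 ≤ P.index := P.one_lt_index_of_ne_top hP.1
  have hℓ : 2 ≤ Nat.card (fiber (cosetMap hSP.le) ((1 : G) : G ⧸ P)) := by nlinarith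
  have h9 : 9 ≤ S.index := by
    by_contra! hle
    have := Nat.mul_le_mul hk hℓ
    have : P.index ≤ 4 := by nlinarith
    interval_cases P.index <;> omega
  rw [hindex] at h9 ⊢
  exact h.add_three_lt_card_mul (fun b => card_fiber_eq_card_fiber _ b _) hk hℓ h9

end Cosets

section Tail

variable {G : Type*} [Group G] {r : ℕ}

/-- The generators `ρ 1, …, ρ r` of a rank `r + 1` group, renumbered from `0`, as elements of the
subgroup they generate. -/
noncomputable def tail (ρ : Fin (r + 1) → G) (i : ℕ) : Subgroup.closure (ρ '' {j | j ≠ 0}) :=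
  if h : i < r then
    ⟨ρ (Fin.succ ⟨i, h⟩), Subgroup.subset_closure ⟨_, Fin.succ_ne_zero _, rfl⟩⟩
  else 1

lemma coe_tail (ρ : Fin (r + 1) → G) {i : ℕ} (hi : i < r) :
    (tail ρ i : G) = ρ (Fin.succ ⟨i, hi⟩) := by
  rw [tail, dif_pos hi]

lemma map_parabolic_tail (ρ : Fin (r + 1) → G) {J : Finset ℕ} (hJ : J ⊆ range r) :
    (parabolic (tail ρ) J).map (Subgroup.subtype _) =
      Subgroup.closure (ρ '' {j | ∃ i ∈ J, (j : ℕ) = i + 1}) := by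
  rw [parabolic, MonoidHom.map_closure]
  congr 1
  ext g
  constructor
  · rintro ⟨-, ⟨i, hi, rfl⟩, rfl⟩
    exact ⟨_, ⟨i, hi, rfl⟩, (coe_tail ρ (Finset.mem_range.1 (hJ hi))).symm⟩
  · rintro ⟨j, ⟨i, hi, hj⟩, rfl⟩
    exact ⟨_, ⟨i, hi, rfl⟩, (coe_tail ρ (Finset.mem_range.1 (hJ hi))).trans
      (congrArg ρ (Fin.ext hj.symm))⟩

lemma mul_self_eq_one_of_orderOf_eq_two {g : G} (hg : orderOf g = 2) : g * g = 1 := by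
  rw [← pow_two, ← hg, pow_orderOf_eq_one]

lemma isStringCGroup_tail {ρ : Fin (r + 1) → G} (hord : ∀ i, orderOf (ρ i) = 2)
    (hfar : ∀ i j : Fin (r + 1), 1 < |((i : ℕ) : ℤ) - ((j : ℕ) : ℤ)| → (ρ i * ρ j) ^ 2 = 1)
    (hint : ∀ J K : Set (Fin (r + 1)), Subgroup.closure (ρ '' J) ⊓ Subgroup.closure (ρ '' K) =
      Subgroup.closure (ρ '' (J ∩ K))) :
    IsStringCGroup (tail ρ) r where
  mul_self i hi := Subtype.ext <| by
    rw [Subgroup.coe_mul, coe_tail ρ hi, mul_self_eq_one_of_orderOf_eq_two (hord _),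
      Subgroup.coe_one]
  ne_one i hi hone := by
    have := hord (Fin.succ ⟨i, hi⟩)
    rw [← coe_tail ρ hi, hone, Subgroup.coe_one, orderOf_one] at this
    omega
  commute i j hij hj := Subtype.ext <| by
    have hsq k := mul_self_eq_one_of_orderOf_eq_two (hord k)
    rw [Subgroup.coe_mul, Subgroup.coe_mul, coe_tail ρ hj, coe_tail ρ (by omega : i < r)]
    refine commute_of_mul_sq_eq_one (hsq _) (hsq _) (hfar _ _ ?_)
    rw [Fin.val_succ, Fin.val_succ, lt_abs]
    dsimp only
    omega
  inf_le J hJ K hK := by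
    rw [← Subgroup.map_le_map_iff_of_injective (Subgroup.subtype_injective _),
      Subgroup.map_inf _ _ _ (Subgroup.subtype_injective _), map_parabolic_tail ρ hJ,
      map_parabolic_tail ρ hK, map_parabolic_tail ρ (Finset.inter_subset_left.trans hJ), hint]
    refine Subgroup.closure_mono (Set.image_mono ?_)
    rintro j ⟨⟨i, hi, hj⟩, i', hi', hj'⟩
    obtain rfl : i = i' := by omega
    exact ⟨i, Finset.mem_inter.2 ⟨hi, hi'⟩, hj⟩
  parabolic_range := by
    rw [← (Subgroup.map_injective (Subgroup.subtype_injective _)).eq_iff,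
      map_parabolic_tail ρ subset_rfl, ← MonoidHom.range_eq_map, Subgroup.range_subtype]
    congr 2
    ext j
    rcases Fin.eq_zero_or_eq_succ j with rfl | ⟨i, rfl⟩ <;> simp

lemma notMem_closure_image_ne {ι : Type*} {ρ : ι → G}
    (hint : ∀ J K : Set ι, Subgroup.closure (ρ '' J) ⊓ Subgroup.closure (ρ '' K) =
      Subgroup.closure (ρ '' (J ∩ K))) {i : ι} (hi : ρ i ≠ 1) :
    ρ i ∉ Subgroup.closure (ρ '' {j | j ≠ i}) := fun hmem => hi <| by
  have : ρ i ∈ Subgroup.closure (ρ '' ({j | j ≠ i} ∩ {i})) := hint _ _ ▸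
    ⟨hmem, Subgroup.subset_closure ⟨i, rfl, rfl⟩⟩
  rwa [show {j | j ≠ i} ∩ {i} = (∅ : Set ι) by ext; simp, Set.image_empty,
    Subgroup.closure_empty, Subgroup.mem_bot] at this

lemma closure_image_ne_zero_le_centralizer {ρ : Fin (r + 2) → G} (hord : ∀ i, orderOf (ρ i) = 2)
    (hfar : ∀ i j : Fin (r + 2), 1 < |((i : ℕ) : ℤ) - ((j : ℕ) : ℤ)| → (ρ i * ρ j) ^ 2 = 1)
    (hcomm : (ρ 0 * ρ 1) ^ 2 = 1) :
    Subgroup.closure (ρ '' {j | j ≠ 0}) ≤ Subgroup.centralizer {ρ 0} := by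
  rw [Subgroup.closure_le]
  rintro - ⟨j, hj, rfl⟩
  have hsq k := mul_self_eq_one_of_orderOf_eq_two (hord k)
  refine Subgroup.mem_centralizer_singleton_iff.2 (commute_of_mul_sq_eq_one (hsq 0) (hsq j) ?_).symm
  obtain ⟨i, rfl⟩ := Fin.exists_succ_eq.2 hj
  rcases Fin.eq_zero_or_eq_succ i with rfl | ⟨k, rfl⟩
  · exact hcomm
  · refine hfar _ _ ?_
    rw [Fin.val_zero, Fin.val_succ, Fin.val_succ, lt_abs]
    omega

end Tail

section CommutingInvolution

open scoped Pointwise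

variable {G α : Type*} [Group G] [MulAction G α] {z : Equiv.Perm α} {B X : Set α}

lemma stabilizer_lt_stabilizer [MulAction.IsPretransitive G α] {A : Set α}
    (hA : MulAction.IsBlock G A) (hX : MulAction.IsBlock G X) (hne : A.Nonempty) (hAX : A ⊂ X) :
    MulAction.stabilizer G A < MulAction.stabilizer G X := by
  obtain ⟨a, ha⟩ := hne
  exact (MulAction.block_stabilizerOrderIso G a).lt_iff_lt (x := ⟨A, ha, hA⟩)
    (y := ⟨X, hAX.1 ha, hX⟩) |>.2 hAX

lemma smul_pair (hzG : ∀ (g : G) x, g • z x = z (g • x)) (g : G) (x : α) :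
    g • ({x, z x} : Set α) = {g • x, z (g • x)} := by
  rw [Set.smul_set_insert, Set.smul_set_singleton, hzG]

lemma isBlock_pair (hz : Function.Involutive z) (hzG : ∀ (g : G) x, g • z x = z (g • x)) (x : α) :
    MulAction.IsBlock G ({x, z x} : Set α) := by
  have hmem {a b : α} (h : a ∈ ({b, z b} : Set α)) : ({a, z a} : Set α) = {b, z b} := by
    rcases h with rfl | rfl
    · rfl
    · rw [hz b, Set.pair_comm]
  rw [MulAction.isBlock_iff_smul_eq_of_mem]
  intro g a ha hga
  rw [← hmem ha, smul_pair hzG, hmem hga, hmem ha]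

lemma two_mul_index_stabilizer_pair [Finite α] [MulAction.IsPretransitive G α]
    (hz : Function.Involutive z) (hzG : ∀ (g : G) x, g • z x = z (g • x)) (hfree : ∀ x, z x ≠ x)
    (x : α) : 2 * (MulAction.stabilizer G ({x, z x} : Set α)).index = Nat.card α := by
  rw [MulAction.index_stabilizer, ← Set.ncard_pair (hfree x).symm]
  exact (isBlock_pair hz hzG x).ncard_block_mul_ncard_orbit_eq ⟨x, by simp⟩

lemma apply_mem_iff_of_image_eq_compl (hz : Function.Involutive z) (hzB : z '' B = Bᶜ) (x : α) :
    z x ∈ B ↔ x ∉ B := by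
  rw [← Set.mem_compl_iff, ← hzB, hz.image_eq_preimage_symm, Set.mem_preimage]

-- As `z` interchanges the two blocks `B` and `Bᶜ`, the image of `B` under `g` decides between the
-- two possible values of `g • x` for all `x` at once.
lemma eq_one_or_toPerm_eq_of_smul_mem_pair [FaithfulSMul G α] (hz : Function.Involutive z)
    (hzG : ∀ (g : G) x, g • z x = z (g • x)) (hB : MulAction.IsBlock G B) (hzB : z '' B = Bᶜ)
    {g : G} (hg : ∀ x, g • x ∈ ({x, z x} : Set α)) : g = 1 ∨ MulAction.toPerm g = z := by
  have hswap := apply_mem_iff_of_image_eq_compl hz hzB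
  rcases hB.smul_eq_or_disjoint g with heq | hdisj
  · left
    have hfix x (hx : x ∈ B) : g • x = x := (hg x).resolve_right fun hgx =>
      (hswap x).1 (hgx ▸ heq ▸ Set.smul_mem_smul_set hx) hx
    refine eq_of_smul_eq_smul fun x : α => ?_
    rw [one_smul]
    by_cases hx : x ∈ B
    · exact hfix x hx
    · exact z.injective ((hzG g x).symm.trans (hfix _ ((hswap x).2 hx)))
  · right
    have hmove x (hx : x ∈ B) : g • x = z x := (hg x).resolve_left fun hgx =>
      Set.disjoint_left.1 hdisj (hgx ▸ Set.smul_mem_smul_set hx) hx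
    refine Equiv.ext fun x => ?_
    by_cases hx : x ∈ B
    · exact hmove x hx
    · exact z.injective ((hzG g x).symm.trans (hmove _ ((hswap x).2 hx)))

lemma normalCore_stabilizer_pair [FaithfulSMul G α] [MulAction.IsPretransitive G α]
    (hz : Function.Involutive z) (hzG : ∀ (g : G) x, g • z x = z (g • x))
    (hzmem : z ∉ (MulAction.toPermHom G α).range) (hB : MulAction.IsBlock G B)
    (hzB : z '' B = Bᶜ) (x : α) :
    (MulAction.stabilizer G ({x, z x} : Set α)).normalCore = ⊥ := by
  rw [Subgroup.eq_bot_iff_forall]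
  refine fun g hg => (eq_one_or_toPerm_eq_of_smul_mem_pair hz hzG hB hzB fun y => ?_).resolve_right
    fun hgz => hzmem ⟨g, hgz⟩
  obtain ⟨k, rfl⟩ := MulAction.exists_smul_eq G x y
  have hstab : (k⁻¹ * g * k) • ({x, z x} : Set α) = {x, z x} := by simpa using hg k⁻¹
  rw [← smul_pair hzG, ← hstab, smul_smul, mul_assoc, mul_inv_cancel_left, mul_smul,
    smul_pair hzG k x]
  exact Set.smul_mem_smul_set (by simp)

theorem IsStringCGroup.eq_empty_or_eq_pair_or_eq_univ [Finite α] [FaithfulSMul G α]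
    [MulAction.IsPretransitive G α] {σ : ℕ → G} {r : ℕ} (h : IsStringCGroup σ r)
    (hz : Function.Involutive z) (hzG : ∀ (g : G) x, g • z x = z (g • x))
    (hzmem : z ∉ (MulAction.toPermHom G α).range) (hB : MulAction.IsBlock G B) (hzB : z '' B = Bᶜ)
    (h8 : Nat.card α ≠ 8) (h12 : Nat.card α ≠ 12) (h16 : Nat.card α ≠ 16)
    (hr : Nat.card α ≤ 2 * (r + 3)) (hX : MulAction.IsBlock G X) (hzX : z '' X = X) :
    X = ∅ ∨ (∃ x, X = {x, z x}) ∨ X = Set.univ := by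
  rcases X.eq_empty_or_nonempty with hempty | ⟨x, hx⟩
  · exact Or.inl hempty
  by_contra! hcon
  have : Finite G := Finite.of_injective _ (MulAction.toPerm_injective (α := G) (β := α))
  have hfree x (hx : z x = x) : False := by
    have := apply_mem_iff_of_image_eq_compl hz hzB x
    rw [hx] at this
    tauto
  have hpair : ({x, z x} : Set α) ⊂ X :=
    (Set.pair_subset hx (hzX ▸ Set.mem_image_of_mem z hx)).ssubset_of_ne (hcon.2.1 x).symm
  have hlt := stabilizer_lt_stabilizer (isBlock_pair hz hzG x) hX ⟨x, by simp⟩ hpair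
  have htop := stabilizer_lt_stabilizer hX .univ ⟨x, hx⟩ (Set.ssubset_univ_iff.2 hcon.2.2)
  have hindex := two_mul_index_stabilizer_pair hz hzG hfree x
  have := h.add_three_lt_index (normalCore_stabilizer_pair hz hzG hzmem hB hzB x) hlt
    htop.ne_top (by omega) (by omega) (by omega)
  omega

end CommutingInvolution

end StringCGroup

open StringCGroup

theorem stmt18_general {α : Type*} [Finite α] {r : ℕ} {ρ : Fin (r + 2) → Equiv.Perm α}
    (hord : ∀ i, orderOf (ρ i) = 2)
    (hfar : ∀ i j : Fin (r + 2), 1 < |((i : ℕ) : ℤ) - ((j : ℕ) : ℤ)| → (ρ i * ρ j) ^ 2 = 1)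
    (hint : ∀ J K : Set (Fin (r + 2)), Subgroup.closure (ρ '' J) ⊓ Subgroup.closure (ρ '' K) =
      Subgroup.closure (ρ '' (J ∩ K)))
    (h0trans : MulAction.IsPretransitive (Subgroup.closure (ρ '' {j | j ≠ 0})) α)
    (hcomm : (ρ 0 * ρ 1) ^ 2 = 1) {B : Set α}
    (hB : MulAction.IsBlock (Subgroup.closure (Set.range ρ)) B) (hBswap : ρ 0 '' B = Bᶜ)
    (h8 : Nat.card α ≠ 8) (h12 : Nat.card α ≠ 12) (h16 : Nat.card α ≠ 16)
    (hr : Nat.card α ≤ 2 * (r + 4)) (X : Set α)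
    (hX : MulAction.IsBlock (Subgroup.closure (Set.range ρ)) X) (hXinv : ρ 0 '' X = X) :
    X = ∅ ∨ (∃ x, X = {x, ρ 0 x}) ∨ X = Set.univ := by
  have hle : Subgroup.closure (ρ '' {j | j ≠ 0}) ≤ Subgroup.closure (Set.range ρ) :=
    Subgroup.closure_mono (Set.image_subset_range _ _)
  have hblock {Y : Set α} (hY : MulAction.IsBlock (Subgroup.closure (Set.range ρ)) Y) :
      MulAction.IsBlock (Subgroup.closure (ρ '' {j | j ≠ 0})) Y :=
    fun g g' => @hY ⟨g, hle g.2⟩ ⟨g', hle g'.2⟩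
  have hord0 := hord 0
  have hinv : Function.Involutive (ρ 0) := fun x => by
    rw [← Equiv.Perm.mul_apply, mul_self_eq_one_of_orderOf_eq_two hord0, Equiv.Perm.one_apply]
  refine (isStringCGroup_tail hord hfar hint).eq_empty_or_eq_pair_or_eq_univ hinv
    (fun g x => ?_) ?_ (hblock hB) hBswap h8 h12 h16 hr (hblock hX) hXinv
  · exact DFunLike.congr_fun (Subgroup.mem_centralizer_singleton_iff.1
      (closure_image_ne_zero_le_centralizer hord hfar hcomm g.2)) x
  · rintro ⟨g, hg⟩
    exact notMem_closure_image_ne hint (fun h => by simp [h] at hord0)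
      ((show (g : Equiv.Perm α) = ρ 0 from hg) ▸ g.2)

theorem stmt18 {n r : ℕ} (hm7 : 7 ≤ n / 2) (hn2 : Even n) (hn16 : n ≠ 16)
    (hr : n / 2 - 2 ≤ r)
    (ρ : Fin r → Equiv.Perm (Fin n)) (hstring : IsStringC ρ)
    -- H_0 is transitive
    (h0trans : MulAction.IsPretransitive
      ↥(Subgroup.closure (ρ '' {j : Fin r | j ≠ ⟨0, by omega⟩})) (Fin n))
    -- ρ 0 and ρ 1 commute
    (hcomm : (ρ ⟨0, by omega⟩ * ρ ⟨1, by omega⟩) ^ 2 = 1)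
    -- a block system with two blocks interchanged by ρ 0
    (B : Set (Fin n)) (hBne : B ≠ ∅) (hBuniv : B ≠ Set.univ)
    (hBblock : MulAction.IsBlock ↥(Subgroup.closure (Set.range ρ)) B)
    (hBswap : (⇑(ρ ⟨0, by omega⟩)) '' B = Bᶜ) :
    ∀ X : Set (Fin n),
      MulAction.IsBlock ↥(Subgroup.closure (Set.range ρ)) X →
      (⇑(ρ ⟨0, by omega⟩)) '' X = X →
      X = ∅ ∨ (∃ x : Fin n, X = {x, ρ ⟨0, by omega⟩ x}) ∨ X = Set.univ := by
  obtain ⟨r, rfl⟩ : ∃ m, r = m + 2 := ⟨r - 2, by omega⟩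
  have heven := Nat.even_iff.1 hn2
  refine stmt18_general hstring.1.1 hstring.1.2 hstring.2 h0trans hcomm hBblock hBswap
    ?_ ?_ ?_ ?_ <;> rw [Nat.card_fin] <;> omega
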